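/- arXiv:1404.4856 — 6 statements merged into one kernel-verified Lean document; each statement's English description precedes it below -/
import Mathlib

section
/- Let G = (V, V_∃, E, w, q_0) be a game graph and a ≤ b real numbers. Call a set U ⊆ V a trap for Adam if every Adam vertex in U has all of its successors in U and every Eve vertex in U has at least one successor in U; for such U let G|U be the induced subgame (vertices U, edges of E with both endpoints in U). Then Eve has a winning strategy in the interval mean-payoff game (G, [a, b]) (a strategy ensuring MP(π) ∈ [a, b] for every consistent play from q_0) if and only if there is a trap U for Adam with q_0 ∈ U such that in G|U, from every vertex of U, Eve has a strategy ensuring MP(π) ≥ a and Eve has a strategy ensuring MP(π) ≤ b. -/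
/-!
If Eve wins the interval game with `σ`, the vertices reachable under `σ` form a trap for Adam
(`trap_reach`), and continuing `σ` from a history leading to a reachable vertex secures both
bounds there, because the mean-payoff ignores finite prefixes (`exists_residual`).

Conversely, work inside the trap. The first ingredient is that strategies securing a bound
from every vertex can be replaced by one positional strategy `f` with quantitative control
(`exists_positional`): for every `ε > 0` there is a potential `p` with `p u - p s ≤ c s u + ε`
on all edges compatible with `f`, where `c` is `w - a` or `b - w`. To see this, take the values
`v` of the discounted games, for discount factors `lam` tending to `1` along an ultrafilter.
Optimal moves are then eventually constant and `(1 - lam) * v` converges to some `x`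
(`exists_limit_value`). When Adam plays his optimal moves, `x` never increases along a play; so
from a vertex with `x < 0` he would push the averages of `c` below a negative number, for every
large time, against the hypothesis. Hence `x ≥ 0`, and `-v` is the potential for `lam` near `1`.
This argument treats a lower bound on the limit inferior and a lower bound on the limit superior
alike, which is needed since the condition `MP ≤ b` is only about infinitely many times.

The second ingredient is a switching strategy (`MP_mem_Icc_of_switching`): at time `k` Eve plays
the positional strategy for `b` if the running sum is at least `a * k`, and the one for `a`
otherwise. For every `ε`, the potential keeps the sum above `(a - ε) * k - C` in the second
mode, while in the first mode this is automatic; the upper bound `(b + ε) * k + C` is dual.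
The strategy itself does not depend on `ε`.
-/

open Filter

/-- A game graph: vertex set `V`, Eve's vertices `Eve`, edge relation `E` (every vertex
has a successor), integer weight function `w`, and initial vertex `init`. -/
structure GameGraph (V : Type) where
  Eve : Set V
  E : V → V → Prop
  w : V → V → ℤ
  init : V
  succ : ∀ v, ∃ u, E v u

namespace GameGraph

variable {V : Type}

/-- `π` is a play starting at vertex `v`. -/
def IsPlayFrom (G : GameGraph V) (v : V) (π : ℕ → V) : Prop :=
  π 0 = v ∧ ∀ i, G.E (π i) (π (i + 1))

/-- `π` is a play (from the initial vertex). -/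
def IsPlay (G : GameGraph V) (π : ℕ → V) : Prop :=
  G.IsPlayFrom G.init π

/-- The prefix `π 0, …, π i` of a play, as a list. -/
def prefixList (π : ℕ → V) (i : ℕ) : List V :=
  List.ofFn (fun j : Fin (i + 1) => π j)

/-- A (history-based) strategy for Eve is legal if it always proposes a successor
of the current (Eve) vertex. -/
def EveLegal (G : GameGraph V) (σ : List V → V) : Prop :=
  ∀ (l : List V) (v : V), v ∈ G.Eve → G.E v (σ (l ++ [v]))

/-- A (history-based) strategy for Adam is legal if it always proposes a successor
of the current (Adam) vertex. -/
def AdamLegal (G : GameGraph V) (σ : List V → V) : Prop :=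
  ∀ (l : List V) (v : V), v ∉ G.Eve → G.E v (σ (l ++ [v]))

/-- The play `π` is consistent with Eve's strategy `σ`. -/
def ConsEve (G : GameGraph V) (σ : List V → V) (π : ℕ → V) : Prop :=
  ∀ i, π i ∈ G.Eve → π (i + 1) = σ (prefixList π i)

/-- The play `π` is consistent with Adam's strategy `σ`. -/
def ConsAdam (G : GameGraph V) (σ : List V → V) (π : ℕ → V) : Prop :=
  ∀ i, π i ∉ G.Eve → π (i + 1) = σ (prefixList π i)

/-- Eve has a winning strategy for the objective `Win`. -/
def EveWins (G : GameGraph V) (Win : (ℕ → V) → Prop) : Prop :=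
  ∃ σ : List V → V, G.EveLegal σ ∧ ∀ π, G.IsPlay π → G.ConsEve σ π → Win π

/-- Adam has a winning strategy: he can ensure the objective `Win` of Eve fails. -/
def AdamWins (G : GameGraph V) (Win : (ℕ → V) → Prop) : Prop :=
  ∃ σ : List V → V, G.AdamLegal σ ∧ ∀ π, G.IsPlay π → G.ConsAdam σ π → ¬ Win π

/-- Consistency with a positional Eve strategy. -/
def ConsEvePos (G : GameGraph V) (f : V → V) (π : ℕ → V) : Prop :=
  ∀ i, π i ∈ G.Eve → π (i + 1) = f (π i)

/-- Consistency with a positional Adam strategy. -/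
def ConsAdamPos (G : GameGraph V) (f : V → V) (π : ℕ → V) : Prop :=
  ∀ i, π i ∉ G.Eve → π (i + 1) = f (π i)

/-- Eve has a positional (memoryless) winning strategy. -/
def EveWinsPos (G : GameGraph V) (Win : (ℕ → V) → Prop) : Prop :=
  ∃ f : V → V, (∀ v ∈ G.Eve, G.E v (f v)) ∧
    ∀ π, G.IsPlay π → G.ConsEvePos f π → Win π

/-- Adam has a positional (memoryless) winning strategy. -/
def AdamWinsPos (G : GameGraph V) (Win : (ℕ → V) → Prop) : Prop :=
  ∃ f : V → V, (∀ v, v ∉ G.Eve → G.E v (f v)) ∧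
    ∀ π, G.IsPlay π → G.ConsAdamPos f π → ¬ Win π

/-- The run of the memory structure `(δ, m)` of a finite-state machine while
reading the play `π`: after `i` steps it has read `π 0, …, π (i-1)`. -/
def memRun {M : Type} (δ : M → V → M) (m : M) (π : ℕ → V) : ℕ → M
  | 0 => m
  | i + 1 => δ (memRun δ m π i) (π i)

/-- Consistency of a play with the finite-memory strategy given by the machine
`(m0, δ, o)`: at step `i`, the machine has memory `memRun δ m0 π i` (having read
`π 0, …, π (i-1)`) and outputs the move `o (memRun δ m0 π i) (π i)`. -/
def ConsEveFM (G : GameGraph V) {M : Type} (m0 : M) (δ : M → V → M)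
    (o : M → V → V) (π : ℕ → V) : Prop :=
  ∀ i, π i ∈ G.Eve → π (i + 1) = o (memRun δ m0 π i) (π i)

/-- Eve has a finite-memory winning strategy, i.e. one computed by a
finite-state machine. -/
def EveWinsFM (G : GameGraph V) (Win : (ℕ → V) → Prop) : Prop :=
  ∃ (M : Type) (_ : Fintype M) (m0 : M) (δ : M → V → M) (o : M → V → V),
    (∀ m, ∀ v ∈ G.Eve, G.E v (o m v)) ∧
    ∀ π, G.IsPlay π → G.ConsEveFM m0 δ o π → Win π

/-- The total weight `w(π[..k])` of the length-`k` prefix of a play. -/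
def partialSum (G : GameGraph V) (π : ℕ → V) (k : ℕ) : ℤ :=
  ∑ i ∈ Finset.range k, G.w (π i) (π (i + 1))

/-- The (liminf) mean-payoff of a play. -/
noncomputable def MP (G : GameGraph V) (π : ℕ → V) : ℝ :=
  liminf (fun k => (G.partialSum π k : ℝ) / (k : ℝ)) atTop

/-- The liminf payoff of a play, in the extended reals. -/
noncomputable def liminfPayoff (G : GameGraph V) (π : ℕ → V) : EReal :=
  liminf (fun i => ((G.w (π i) (π (i + 1)) : ℝ) : EReal)) atTop

/-- The total-sum payoff of a play, in the extended reals. -/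
noncomputable def totalPayoff (G : GameGraph V) (π : ℕ → V) : EReal :=
  liminf (fun k => ((G.partialSum π k : ℝ) : EReal)) atTop

/-- The discounted sum of a play, with discount factor `lam`. -/
noncomputable def DS (G : GameGraph V) (lam : ℝ) (π : ℕ → V) : ℝ :=
  ∑' i : ℕ, lam ^ i * (G.w (π i) (π (i + 1)) : ℝ)

/-- A play of a (min-)parity game is winning for Eve iff the minimal priority
occurring infinitely often is even. -/
def ParityWin (Ω : V → ℕ) (π : ℕ → V) : Prop :=
  ∃ p, Even p ∧ (∀ N, ∃ k, N ≤ k ∧ Ω (π k) = p) ∧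
    ∀ q, (∀ N, ∃ k, N ≤ k ∧ Ω (π k) = q) → p ≤ q

end GameGraph
/-- `U` is a trap for Adam: every Adam vertex of `U` has all of its successors in
`U`, and every Eve vertex of `U` has at least one successor in `U`. -/
def GameGraph.Trap {V : Type} (G : GameGraph V) (U : Set V) : Prop :=
  (∀ v ∈ U, v ∉ G.Eve → ∀ u, G.E v u → u ∈ U) ∧
  ∀ v ∈ U, v ∈ G.Eve → ∃ u ∈ U, G.E v u

/-- The subgame induced by a trap `U` for Adam containing the initial vertex. -/
def GameGraph.restrict {V : Type} (G : GameGraph V) (U : Set V)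
    (hU : G.Trap U) (h0 : G.init ∈ U) : GameGraph U where
  Eve := {v : U | (v : V) ∈ G.Eve}
  E x y := G.E x y
  w x y := G.w x y
  init := ⟨G.init, h0⟩
  succ := by
    rintro ⟨v, hv⟩
    by_cases hE : v ∈ G.Eve
    · obtain ⟨u, hu, he⟩ := hU.2 v hv hE
      exact ⟨⟨u, hu⟩, he⟩
    · obtain ⟨u, he⟩ := G.succ v
      exact ⟨⟨u, hU.1 v hv hE u he⟩, he⟩

/-! ### Positional strategies and potentials -/

namespace GameGraph

lemma exists_weight_bound {V : Type} [Finite V] (c : V → V → ℝ) :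
    ∃ W : ℝ, 0 ≤ W ∧ ∀ s u, |c s u| ≤ W := by
  have := Fintype.ofFinite V
  refine ⟨∑ s, ∑ u, |c s u|, by positivity, fun s u => ?_⟩
  refine (Finset.single_le_sum (f := fun u => |c s u|) (fun _ _ => abs_nonneg _)
    (Finset.mem_univ u)).trans ?_
  exact Finset.single_le_sum (f := fun s => ∑ u, |c s u|)
    (fun _ _ => Finset.sum_nonneg fun _ _ => abs_nonneg _) (Finset.mem_univ s)

/-- The one-step operator of the discounted game with real weights `c` and discount
factor `lam`: Eve maximises, Adam minimises. -/
noncomputable def shapley {V : Type} (G : GameGraph V) (c : V → V → ℝ) (lam : ℝ)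
    (x : V → ℝ) (s : V) : ℝ :=
  open Classical in
  if s ∈ G.Eve then ⨆ u : {u // G.E s u}, (c s u + lam * x u)
  else ⨅ u : {u // G.E s u}, (c s u + lam * x u)

lemma shapley_le {V : Type} [Fintype V] (G : GameGraph V) (c : V → V → ℝ) {lam : ℝ}
    (hlam : 0 ≤ lam) (x y : V → ℝ) (s : V) :
    G.shapley c lam x s ≤ G.shapley c lam y s + lam * dist x y := by
  have hne : Nonempty {u // G.E s u} := by
    obtain ⟨u, hu⟩ := G.succ s
    exact ⟨⟨u, hu⟩⟩
  have hpt : ∀ u : {u // G.E s u}, c s u + lam * x u ≤ c s u + lam * y u + lam * dist x y := by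
    intro u
    have h1 : x u - y u ≤ dist x y :=
      (le_abs_self _).trans ((Real.dist_eq _ _).symm.le.trans (dist_le_pi_dist x y u))
    nlinarith
  unfold shapley
  split_ifs with h
  · refine ciSup_le fun u => (hpt u).trans ?_
    gcongr
    exact le_ciSup (f := fun u : {u // G.E s u} => c s u + lam * y u)
      (Set.finite_range _).bddAbove u
  · rw [← sub_le_iff_le_add]
    refine le_ciInf fun u => ?_
    rw [sub_le_iff_le_add]
    exact (ciInf_le (Set.finite_range _).bddBelow u).trans (hpt u)

/-- The discounted game has a value `v`, and both players have positional optimal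
strategies, recorded in one function `h`. The normalised value `(1 - lam) * v` is bounded
by the weights. -/
lemma exists_discounted_value {V : Type} [Fintype V] (G : GameGraph V) (c : V → V → ℝ)
    {W : ℝ} (hW : 0 ≤ W) (hc : ∀ s u, |c s u| ≤ W) {lam : ℝ} (h0 : 0 ≤ lam) (h1 : lam < 1) :
    ∃ (v : V → ℝ) (h : V → V), (∀ s, G.E s (h s)) ∧
      (∀ s u, G.E s u → (s ∈ G.Eve → u = h s) → v s ≤ c s u + lam * v u) ∧
      (∀ s u, G.E s u → (s ∉ G.Eve → u = h s) → c s u + lam * v u ≤ v s) ∧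
      ∀ s, |(1 - lam) * v s| ≤ W := by
  have hK : ContractingWith ⟨lam, h0⟩ (G.shapley c lam) := by
    refine ⟨by exact_mod_cast h1, LipschitzWith.of_dist_le_mul fun x y => ?_⟩
    refine (dist_pi_le_iff (mul_nonneg h0 dist_nonneg)).2 fun s => ?_
    have e1 := G.shapley_le c h0 x y s
    have e2 := G.shapley_le c h0 y x s
    rw [dist_comm y x] at e2
    rw [Real.dist_eq, abs_le]
    change -(lam * dist x y) ≤ _ ∧ _ ≤ lam * dist x y
    constructor <;> linarith
  obtain ⟨v, hv⟩ : ∃ v, G.shapley c lam v = v := ⟨_, hK.fixedPoint_isFixedPt⟩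
  have hex : ∀ s, ∃ u, G.E s u ∧ v s = c s u + lam * v u := by
    intro s
    have hne : Nonempty {u // G.E s u} := by
      obtain ⟨u, hu⟩ := G.succ s
      exact ⟨⟨u, hu⟩⟩
    have hs := congrFun hv s
    unfold shapley at hs
    split_ifs at hs with hE
    · obtain ⟨u, hu⟩ := exists_eq_ciSup_of_finite
        (f := fun u : {u // G.E s u} => c s u + lam * v u)
      exact ⟨u, u.2, by rw [← hs, ← hu]⟩
    · obtain ⟨u, hu⟩ := exists_eq_ciInf_of_finite
        (f := fun u : {u // G.E s u} => c s u + lam * v u)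
      exact ⟨u, u.2, by rw [← hs, ← hu]⟩
  choose h hE hh using hex
  refine ⟨v, h, hE, ?_, ?_, ?_⟩
  · intro s u hu himp
    by_cases hs : s ∈ G.Eve
    · rw [himp hs]
      exact (hh s).le
    · have hs' := congrFun hv s
      unfold shapley at hs'
      rw [if_neg hs] at hs'
      rw [← hs']
      exact ciInf_le (f := fun u : {u // G.E s u} => c s u + lam * v u)
        (Set.finite_range _).bddBelow ⟨u, hu⟩
  · intro s u hu himp
    by_cases hs : s ∈ G.Eve
    · have hs' := congrFun hv s
      unfold shapley at hs'
      rw [if_pos hs] at hs'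
      rw [← hs']
      exact le_ciSup (f := fun u : {u // G.E s u} => c s u + lam * v u)
        (Set.finite_range _).bddAbove ⟨u, hu⟩
    · rw [himp hs]
      exact (hh s).ge
  · have hn : ‖v‖ ≤ W + lam * ‖v‖ := by
      refine (pi_norm_le_iff_of_nonneg (by positivity)).2 fun s => ?_
      rw [hh s]
      refine (norm_add_le _ _).trans ?_
      rw [norm_mul, Real.norm_of_nonneg h0]
      gcongr
      · exact hc _ _
      · exact norm_le_pi_norm v _
    intro s
    rw [abs_mul, abs_of_pos (by linarith)]
    have : |v s| ≤ ‖v‖ := norm_le_pi_norm v s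
    nlinarith

/-- Along discount factors tending to `1`, some choice `h` of optimal moves recurs and the
normalised values converge to a limit `x`. -/
lemma exists_limit_value {V : Type} [Fintype V] (G : GameGraph V) (c : V → V → ℝ) :
    ∃ (x : V → ℝ) (h : V → V), (∀ s, G.E s (h s)) ∧
      (∀ s u, G.E s u → (s ∉ G.Eve → u = h s) → x u ≤ x s) ∧
      ∀ δ > 0, ∃ (lam : ℝ) (v : V → ℝ),
        (∀ s u, G.E s u → (s ∈ G.Eve → u = h s) → v s ≤ c s u + lam * v u) ∧
        (∀ s u, G.E s u → (s ∉ G.Eve → u = h s) → c s u + lam * v u ≤ v s) ∧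
        ∀ s, |(1 - lam) * v s - x s| < δ := by
  obtain ⟨W, hW, hc⟩ := exists_weight_bound c
  let lam : ℕ → ℝ := fun n => 1 - 1 / ((n : ℝ) + 1)
  have hl0 : ∀ n, 0 ≤ lam n := by
    intro n
    have : 1 / ((n : ℝ) + 1) ≤ 1 := by
      rw [div_le_one (by positivity)]
      linarith [n.cast_nonneg (α := ℝ)]
    simp only [lam]
    linarith
  have hl1 : ∀ n, lam n < 1 := by
    intro n
    have : 0 < 1 / ((n : ℝ) + 1) := by positivity
    simp only [lam]
    linarith
  choose v h hE hEve hAdam hb using fun n =>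
    G.exists_discounted_value c hW hc (hl0 n) (hl1 n)
  let F : Ultrafilter ℕ := hyperfilter ℕ
  have hF : (F : Filter ℕ) ≤ atTop := Nat.hyperfilter_le_atTop
  let y : ℕ → V → ℝ := fun n s => (1 - lam n) * v n s
  obtain ⟨h', hh'⟩ : ∃ h', ∀ᶠ n in (F : Filter ℕ), h n = h' := by
    obtain ⟨h', hh'⟩ := Ultrafilter.eq_pure_of_finite (F.map h)
    refine ⟨h', ?_⟩
    have : {h'} ∈ F.map h := by
      rw [hh']
      exact rfl
    exact this
  obtain ⟨x, -, hx⟩ := (isCompact_closedBall (0 : V → ℝ) W).ultrafilter_le_nhds (F.map y) (by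
    rw [le_principal_iff]
    refine Eventually.of_forall (f := (F : Filter ℕ)) fun n => ?_
    simp only [mem_closedBall_zero_iff]
    exact (pi_norm_le_iff_of_nonneg hW).2 fun s => hb n s)
  have hy : Tendsto y F (nhds x) := hx
  have hys : ∀ s, Tendsto (fun n => y n s) F (nhds (x s)) := fun s =>
    (tendsto_pi_nhds.1 hy) s
  have hlt : Tendsto lam F (nhds 1) := by
    have := (tendsto_one_div_add_atTop_nhds_zero_nat (𝕜 := ℝ)).const_sub 1
    rw [sub_zero] at this
    exact this.mono_left hF
  refine ⟨x, h', ?_, ?_, ?_⟩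
  · obtain ⟨n, hn⟩ := hh'.exists
    intro s
    rw [← hn]
    exact hE n s
  · intro s u hsu himp
    -- The optimality inequality, multiplied by `1 - lam`, passes to the limit.
    have hlim : Tendsto (fun n => (1 - lam n) * c s u + lam n * y n u) F
        (nhds ((1 - 1) * c s u + 1 * x u)) :=
      ((hlt.const_sub 1).mul_const _).add (hlt.mul (hys u))
    rw [sub_self, zero_mul, zero_add, one_mul] at hlim
    refine le_of_tendsto_of_tendsto hlim (hys s) ?_
    filter_upwards [hh'] with n hn
    have e := hAdam n s u hsu (by rw [hn]; exact himp)
    have := mul_le_mul_of_nonneg_left e (sub_nonneg.2 (hl1 n).le)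
    simp only [y]
    linarith
  · intro δ hδ
    have hall : ∀ᶠ n in (F : Filter ℕ), ∀ s, |y n s - x s| < δ := by
      rw [eventually_all]
      intro s
      exact (Metric.tendsto_nhds.1 (hys s)) δ hδ
    obtain ⟨n, hn, hn'⟩ := (hall.and hh').exists
    subst hn'
    exact ⟨lam n, v n, hEve n, hAdam n, hn⟩

lemma prefixList_succ {V : Type} (π : ℕ → V) (i : ℕ) :
    prefixList π (i + 1) = prefixList π i ++ [π (i + 1)] := by
  unfold prefixList
  rw [List.ofFn_succ_last]
  rfl

lemma length_prefixList {V : Type} (π : ℕ → V) (i : ℕ) : (prefixList π i).length = i + 1 := by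
  simp [prefixList]

lemma prefixList_congr {V : Type} {π ρ : ℕ → V} {i : ℕ} (h : ∀ j ≤ i, π j = ρ j) :
    prefixList π i = prefixList ρ i := by
  unfold prefixList
  congr 1
  funext j
  exact h j (Nat.lt_succ_iff.1 j.2)

lemma exists_prefixList_eq {V : Type} (π : ℕ → V) (i : ℕ) :
    ∃ l : List V, l.length = i ∧ prefixList π i = l ++ [π i] := by
  cases i with
  | zero => exact ⟨[], rfl, by simp [prefixList]⟩
  | succ i => exact ⟨_, length_prefixList π i, prefixList_succ π i⟩

lemma getD_prefixList {V : Type} (π : ℕ → V) {i j : ℕ} (h : j ≤ i) (d : V) :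
    (prefixList π i).getD j d = π j := by
  unfold prefixList
  rw [List.getD_eq_getElem _ _ (by simpa using Nat.lt_succ_of_le h), List.getElem_ofFn]

/-- Any rule choosing the next vertex from the history generates an infinite sequence. -/
lemma exists_generated {V : Type} (v : V) (τ : List V → V) :
    ∃ π : ℕ → V, π 0 = v ∧ ∀ i, π (i + 1) = τ (prefixList π i) := by
  let hist : ℕ → List V := fun n => Nat.rec [v] (fun _ l => l ++ [τ l]) n
  let π : ℕ → V := fun n => Nat.casesOn n v (fun i => τ (hist i))
  have hp : ∀ n, prefixList π n = hist n := by
    intro n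
    induction n with
    | zero => simp [prefixList, π, hist]
    | succ n ih =>
      rw [prefixList_succ, ih]
  exact ⟨π, rfl, fun i => by rw [hp]⟩

/-- If from every vertex Eve can make the averages of `c` non-negative in the limit superior,
then one positional strategy `f` does so from everywhere, as witnessed by potentials with
arbitrarily small slack. -/
lemma exists_positional {V : Type} [Fintype V] (G : GameGraph V) (c : V → V → ℝ)
    (hyp : ∀ v, ∃ σ : List V → V, G.EveLegal σ ∧ ∀ π, G.IsPlayFrom v π → G.ConsEve σ π →
      ∀ ε > 0, ∃ᶠ k : ℕ in atTop, -ε * k ≤ ∑ i ∈ Finset.range k, c (π i) (π (i + 1))) :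
    ∃ f : V → V, (∀ s, G.E s (f s)) ∧ ∀ ε > 0, ∃ p : V → ℝ,
      ∀ s u, G.E s u → (s ∈ G.Eve → u = f s) → p u - p s ≤ c s u + ε := by
  obtain ⟨x, h, hE, hmono, happ⟩ := G.exists_limit_value c
  have hx : ∀ s, 0 ≤ x s := by
    -- Otherwise Adam plays `h` from a vertex of negative limit value.
    by_contra! hneg
    obtain ⟨s₀, hs₀⟩ := hneg
    obtain ⟨lam, v, -, hAdam, hclose⟩ := happ (-x s₀ / 2) (by linarith)
    obtain ⟨σ, hσ, hwin⟩ := hyp s₀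
    classical
    obtain ⟨π, h0, hπ⟩ := exists_generated s₀
      (fun l => if l.getLastD s₀ ∈ G.Eve then σ l else h (l.getLastD s₀))
    have hstep : ∀ i, π (i + 1) = if π i ∈ G.Eve then σ (prefixList π i) else h (π i) := by
      intro i
      obtain ⟨l, -, hl⟩ := exists_prefixList_eq π i
      rw [hπ i, hl]
      simp
    have hedge : ∀ i, G.E (π i) (π (i + 1)) := by
      intro i
      rw [hstep i]
      split_ifs with hi
      · obtain ⟨l, -, hl⟩ := exists_prefixList_eq π i
        rw [hl]
        exact hσ l _ hi
      · exact hE _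
    have hA : ∀ i, π i ∉ G.Eve → π (i + 1) = h (π i) := fun i hi => by
      rw [hstep i, if_neg hi]
    have hval : ∀ i, x (π i) ≤ x s₀ := by
      intro i
      induction i with
      | zero => rw [h0]
      | succ i ih => exact (hmono _ _ (hedge i) (hA i)).trans ih
    have hsum : ∀ k : ℕ, ∑ i ∈ Finset.range k, c (π i) (π (i + 1)) ≤
        v (π 0) - v (π k) + k * (x s₀ / 2) := by
      intro k
      induction k with
      | zero => simp
      | succ k ih =>
        rw [Finset.sum_range_succ]
        have e1 := hAdam _ _ (hedge k) (hA k)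
        have e2 := abs_lt.1 (hclose (π (k + 1)))
        have e3 := hval (k + 1)
        push_cast
        linarith
    have hf := hwin π ⟨h0, hedge⟩ (fun i hi => by rw [hstep i, if_pos hi]) (-x s₀ / 4)
      (by linarith)
    have hlarge : ∀ᶠ k : ℕ in atTop, 2 * ‖v‖ < (k : ℝ) * (-x s₀ / 4) :=
      (tendsto_natCast_atTop_atTop.atTop_mul_const (by linarith)).eventually_gt_atTop _
    obtain ⟨k, hk1, hk2⟩ := (hf.and_eventually hlarge).exists
    have b1 := abs_le.1 (norm_le_pi_norm v (π 0))
    have b2 := abs_le.1 (norm_le_pi_norm v (π k))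
    have := hsum k
    linarith
  refine ⟨h, hE, fun ε hε => ?_⟩
  obtain ⟨lam, v, hEve, -, hclose⟩ := happ ε hε
  refine ⟨fun s => -v s, fun s u hsu himp => ?_⟩
  have e1 := hEve s u hsu himp
  have e2 := abs_lt.1 (hclose u)
  have e3 := hx u
  linarith

end GameGraph

/-! ### The mean-payoff of a play -/

namespace GameGraph

lemma partialSum_succ {V : Type} (G : GameGraph V) (π : ℕ → V) (k : ℕ) :
    G.partialSum π (k + 1) = G.partialSum π k + G.w (π k) (π (k + 1)) :=
  Finset.sum_range_succ _ _

lemma exists_avg_bound {V : Type} [Finite V] (G : GameGraph V) (π : ℕ → V) :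
    ∃ W : ℝ, ∀ k : ℕ, |(G.partialSum π k : ℝ) / (k : ℝ)| ≤ W := by
  obtain ⟨W, hW, hw⟩ := exists_weight_bound (fun s u => (G.w s u : ℝ))
  refine ⟨W, fun k => ?_⟩
  have hs : |(G.partialSum π k : ℝ)| ≤ W * k := by
    induction k with
    | zero => simp [partialSum]
    | succ k ih =>
      rw [partialSum_succ]
      push_cast
      have := hw (π k) (π (k + 1))
      refine (abs_add_le _ _).trans ?_
      linarith
  rw [abs_div, Nat.abs_cast]
  exact div_le_of_le_mul₀ (Nat.cast_nonneg k) hW hs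

lemma le_MP_iff {V : Type} [Finite V] (G : GameGraph V) (π : ℕ → V) (a : ℝ) :
    a ≤ G.MP π ↔ ∀ ε > 0, ∀ᶠ k : ℕ in atTop, (a - ε) * k ≤ G.partialSum π k := by
  obtain ⟨W, hW⟩ := G.exists_avg_bound π
  have hbdd : IsBoundedUnder (· ≥ ·) atTop
      (fun k : ℕ => (G.partialSum π k : ℝ) / (k : ℝ)) :=
    isBoundedUnder_of ⟨-W, fun k => (abs_le.1 (hW k)).1⟩
  have hcob : IsCoboundedUnder (· ≥ ·) atTop
      (fun k : ℕ => (G.partialSum π k : ℝ) / (k : ℝ)) :=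
    (isBoundedUnder_of ⟨W, fun k => (abs_le.1 (hW k)).2⟩ :
      IsBoundedUnder (· ≤ ·) atTop _).isCoboundedUnder_ge
  constructor
  · intro h ε hε
    have hlt : a - ε < G.MP π := by linarith
    filter_upwards [eventually_lt_of_lt_liminf hlt hbdd, eventually_gt_atTop 0] with k hk hk0
    exact ((lt_div_iff₀ (by exact_mod_cast hk0)).1 hk).le
  · intro h
    refine le_of_forall_pos_sub_le fun ε hε => le_liminf_of_le hcob ?_
    filter_upwards [h ε hε, eventually_gt_atTop 0] with k hk hk0
    exact (le_div_iff₀ (by exact_mod_cast hk0)).2 hk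

lemma MP_le_iff {V : Type} [Finite V] (G : GameGraph V) (π : ℕ → V) (b : ℝ) :
    G.MP π ≤ b ↔ ∀ ε > 0, ∃ᶠ k : ℕ in atTop, (G.partialSum π k : ℝ) ≤ (b + ε) * k := by
  obtain ⟨W, hW⟩ := G.exists_avg_bound π
  have hbdd : IsBoundedUnder (· ≥ ·) atTop
      (fun k : ℕ => (G.partialSum π k : ℝ) / (k : ℝ)) :=
    isBoundedUnder_of ⟨-W, fun k => (abs_le.1 (hW k)).1⟩
  have hcob : IsCoboundedUnder (· ≥ ·) atTop
      (fun k : ℕ => (G.partialSum π k : ℝ) / (k : ℝ)) :=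
    (isBoundedUnder_of ⟨W, fun k => (abs_le.1 (hW k)).2⟩ :
      IsBoundedUnder (· ≤ ·) atTop _).isCoboundedUnder_ge
  constructor
  · intro h ε hε
    have hlt : G.MP π < b + ε := by linarith
    refine ((frequently_lt_of_liminf_lt hcob hlt).and_eventually
      (eventually_gt_atTop 0)).mono ?_
    rintro k ⟨hk, hk0⟩
    exact ((div_lt_iff₀ (by exact_mod_cast hk0)).1 hk).le
  · intro h
    refine le_of_forall_pos_le_add fun ε hε => liminf_le_of_frequently_le ?_ hbdd
    refine ((h ε hε).and_eventually (eventually_gt_atTop 0)).mono ?_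
    rintro k ⟨hk, hk0⟩
    exact (div_le_iff₀ (by exact_mod_cast hk0)).2 hk

lemma partialSum_add {V : Type} (G : GameGraph V) (π : ℕ → V) (n k : ℕ) :
    G.partialSum π (n + k) = G.partialSum π n + G.partialSum (fun i => π (n + i)) k :=
  Finset.sum_range_add _ _ _

/-- The mean-payoff does not depend on a finite prefix. -/
lemma MP_shift {V : Type} [Finite V] (G : GameGraph V) (π : ℕ → V) (n : ℕ) :
    G.MP (fun i => π (n + i)) = G.MP π := by
  have hlarge : ∀ C ε : ℝ, 0 < ε → ∀ᶠ k : ℕ in atTop, C < (k : ℝ) * ε := fun C ε hε =>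
    (tendsto_natCast_atTop_atTop.atTop_mul_const hε).eventually_gt_atTop _
  apply le_antisymm
  · rw [le_MP_iff]
    intro ε hε
    have h := (G.le_MP_iff (fun i => π (n + i)) _).1 le_rfl (ε / 2) (by linarith)
    set m := G.MP (fun i => π (n + i))
    have h' := h.and (hlarge ((m - ε) * n - G.partialSum π n) (ε / 2) (by linarith))
    rw [eventually_atTop] at h' ⊢
    obtain ⟨K, hK⟩ := h'
    refine ⟨n + K, fun k hk => ?_⟩
    obtain ⟨j, rfl⟩ := Nat.exists_eq_add_of_le (le_of_add_le_left hk)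
    obtain ⟨h1, h2⟩ := hK j (by omega)
    rw [partialSum_add]
    push_cast
    linarith
  · rw [le_MP_iff]
    intro ε hε
    have h := (G.le_MP_iff π _).1 le_rfl (ε / 2) (by linarith)
    set m := G.MP π
    have h' := ((tendsto_add_atTop_nat n).eventually h).and
      (hlarge (G.partialSum π n - (m - ε / 2) * n) (ε / 2) (by linarith))
    refine h'.mono ?_
    rintro k ⟨h1, h2⟩
    rw [add_comm k n, partialSum_add] at h1
    push_cast at h1
    linarith

/-! ### Combining the two positional strategies -/

/-- Eve plays the positional strategy `f₁` securing `a` while the running sum is below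
`a * k`, and the strategy `f₂` securing `b` otherwise. The two strategies correct each other,
and the mean-payoff ends up between `a` and `b`. -/
lemma MP_mem_Icc_of_switching {V : Type} [Finite V] (G : GameGraph V) {a b : ℝ} (hab : a ≤ b)
    {f₁ f₂ : V → V}
    (h₁ : ∀ ε > 0, ∃ p : V → ℝ, ∀ s u, G.E s u → (s ∈ G.Eve → u = f₁ s) →
      p u - p s ≤ (G.w s u - a) + ε)
    (h₂ : ∀ ε > 0, ∃ p : V → ℝ, ∀ s u, G.E s u → (s ∈ G.Eve → u = f₂ s) →
      p u - p s ≤ (b - G.w s u) + ε)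
    {π : ℕ → V} (hE : ∀ i, G.E (π i) (π (i + 1)))
    (hlow : ∀ i, (G.partialSum π i : ℝ) < a * i → π i ∈ G.Eve → π (i + 1) = f₁ (π i))
    (hhigh : ∀ i, a * i ≤ (G.partialSum π i : ℝ) → π i ∈ G.Eve → π (i + 1) = f₂ (π i)) :
    G.MP π ∈ Set.Icc a b := by
  have := Fintype.ofFinite V
  obtain ⟨W, hW, hw⟩ := exists_weight_bound (fun s u => (G.w s u : ℝ))
  have hlarge : ∀ C ε : ℝ, 0 < ε → ∀ᶠ k : ℕ in atTop, C < (k : ℝ) * ε := fun C ε hε =>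
    (tendsto_natCast_atTop_atTop.atTop_mul_const hε).eventually_gt_atTop _
  constructor
  · rw [le_MP_iff]
    intro ε hε
    obtain ⟨p, hp⟩ := h₁ (ε / 2) (by linarith)
    have hpb : ∀ s, |p s| ≤ ‖p‖ := fun s => norm_le_pi_norm p s
    have hinv : ∀ k : ℕ, -(W + |a| + ‖p‖) - ε / 2 * k ≤
        G.partialSum π k - a * k - p (π k) := by
      intro k
      induction k with
      | zero =>
        have := abs_le.1 (hpb (π 0))
        simp only [partialSum, Finset.range_zero, Finset.sum_empty]
        have := abs_nonneg a
        push_cast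
        linarith
      | succ k ih =>
        rw [partialSum_succ]
        push_cast
        rcases lt_or_ge (G.partialSum π k : ℝ) (a * k) with hlt | hge
        · have := hp _ _ (hE k) (hlow k hlt)
          linarith
        · have e1 := abs_le.1 (hpb (π (k + 1)))
          have e2 := abs_le.1 (hw (π k) (π (k + 1)))
          have e3 := le_abs_self a
          have e4 : 0 ≤ ε / 2 * ((k : ℝ) + 1) := by positivity
          linarith
    filter_upwards [hlarge (W + |a| + 2 * ‖p‖) (ε / 2) (by linarith)] with k hk
    have e1 := hinv k
    have e2 := abs_le.1 (hpb (π k))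
    linarith
  · rw [MP_le_iff]
    intro ε hε
    obtain ⟨p, hp⟩ := h₂ (ε / 2) (by linarith)
    have hpb : ∀ s, |p s| ≤ ‖p‖ := fun s => norm_le_pi_norm p s
    have hinv : ∀ k : ℕ, -(W + |b| + ‖p‖) - ε / 2 * k ≤
        b * k - G.partialSum π k - p (π k) := by
      intro k
      induction k with
      | zero =>
        have := abs_le.1 (hpb (π 0))
        simp only [partialSum, Finset.range_zero, Finset.sum_empty]
        have := abs_nonneg b
        push_cast
        linarith
      | succ k ih =>
        rw [partialSum_succ]
        push_cast
        rcases lt_or_ge (G.partialSum π k : ℝ) (a * k) with hlt | hge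
        · have e1 := abs_le.1 (hpb (π (k + 1)))
          have e2 := abs_le.1 (hw (π k) (π (k + 1)))
          have e3 := neg_abs_le b
          have e4 : 0 ≤ ε / 2 * ((k : ℝ) + 1) := by positivity
          have e5 : a * k ≤ b * k := mul_le_mul_of_nonneg_right hab k.cast_nonneg
          linarith
        · have := hp _ _ (hE k) (hhigh k hge)
          linarith
    refine Eventually.frequently ?_
    filter_upwards [hlarge (W + |b| + 2 * ‖p‖) (ε / 2) (by linarith)] with k hk
    have e1 := hinv k
    have e2 := abs_le.1 (hpb (π k))
    linarith

/-- If Eve can secure each bound of the interval from everywhere, possibly with strategies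
depending on the start vertex, then she has two positional strategies with potentials. -/
lemma exists_positional_pair {V : Type} [Finite V] (G : GameGraph V) {a b : ℝ}
    (h : ∀ v, (∃ σ : List V → V, G.EveLegal σ ∧
        ∀ π, G.IsPlayFrom v π → G.ConsEve σ π → a ≤ G.MP π) ∧
      (∃ σ : List V → V, G.EveLegal σ ∧
        ∀ π, G.IsPlayFrom v π → G.ConsEve σ π → G.MP π ≤ b)) :
    ∃ f₁ f₂ : V → V, (∀ s, G.E s (f₁ s)) ∧ (∀ s, G.E s (f₂ s)) ∧
      (∀ ε > 0, ∃ p : V → ℝ, ∀ s u, G.E s u → (s ∈ G.Eve → u = f₁ s) →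
        p u - p s ≤ (G.w s u - a) + ε) ∧
      (∀ ε > 0, ∃ p : V → ℝ, ∀ s u, G.E s u → (s ∈ G.Eve → u = f₂ s) →
        p u - p s ≤ (b - G.w s u) + ε) := by
  have := Fintype.ofFinite V
  obtain ⟨f₁, hf₁, h₁⟩ := G.exists_positional (fun s u => G.w s u - a) (by
    intro v
    obtain ⟨⟨σ, hσ, hwin⟩, -⟩ := h v
    refine ⟨σ, hσ, fun π hπ hc ε hε => ?_⟩
    refine (((G.le_MP_iff π a).1 (hwin π hπ hc) ε hε).mono fun k hk => ?_).frequently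
    rw [Finset.sum_sub_distrib]
    simp only [partialSum, Int.cast_sum] at hk
    simp only [Finset.sum_const, Finset.card_range, nsmul_eq_mul]
    linarith)
  obtain ⟨f₂, hf₂, h₂⟩ := G.exists_positional (fun s u => b - G.w s u) (by
    intro v
    obtain ⟨-, ⟨σ, hσ, hwin⟩⟩ := h v
    refine ⟨σ, hσ, fun π hπ hc ε hε => ?_⟩
    refine ((G.MP_le_iff π b).1 (hwin π hπ hc) ε hε).mono fun k hk => ?_
    rw [Finset.sum_sub_distrib]
    simp only [partialSum, Int.cast_sum] at hk
    simp only [Finset.sum_const, Finset.card_range, nsmul_eq_mul]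
    linarith)
  exact ⟨f₁, f₂, hf₁, hf₂, h₁, h₂⟩

lemma eveWins_of_trap {V : Type} [Finite V] (G : GameGraph V) {a b : ℝ} (hab : a ≤ b)
    {U : Set V} (hU : G.Trap U) (h0 : G.init ∈ U) {f₁ f₂ : U → U}
    (hf₁ : ∀ s, (G.restrict U hU h0).E s (f₁ s)) (hf₂ : ∀ s, (G.restrict U hU h0).E s (f₂ s))
    (h₁ : ∀ ε > 0, ∃ p : U → ℝ, ∀ s u, (G.restrict U hU h0).E s u →
      (s ∈ (G.restrict U hU h0).Eve → u = f₁ s) →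
      p u - p s ≤ ((G.restrict U hU h0).w s u - a) + ε)
    (h₂ : ∀ ε > 0, ∃ p : U → ℝ, ∀ s u, (G.restrict U hU h0).E s u →
      (s ∈ (G.restrict U hU h0).Eve → u = f₂ s) →
      p u - p s ≤ (b - (G.restrict U hU h0).w s u) + ε) :
    G.EveWins (fun π => G.MP π ∈ Set.Icc a b) := by
  -- Eve reads the running sum off the history and switches accordingly; outside `U` she
  -- moves arbitrarily.
  have hex : ∀ l : List V, ∃ u : V, ∀ l' v, l = l' ++ [v] → v ∈ G.Eve → G.E v u ∧
      ∀ hv : v ∈ U,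
        ((G.partialSum (fun i => l.getD i G.init) l'.length : ℝ) < a * l'.length →
          u = f₁ ⟨v, hv⟩) ∧
        (a * l'.length ≤ (G.partialSum (fun i => l.getD i G.init) l'.length : ℝ) →
          u = f₂ ⟨v, hv⟩) := by
    intro l
    rcases l.eq_nil_or_concat with rfl | ⟨l₀, v₀, rfl⟩
    · exact ⟨G.init, fun l' v h => by simp at h⟩
    · rw [List.concat_eq_append]
      by_cases hv : v₀ ∈ U
      · rcases lt_or_ge
          (G.partialSum (fun i => (l₀ ++ [v₀]).getD i G.init) l₀.length : ℝ)
          (a * l₀.length) with hlt | hge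
        · refine ⟨f₁ ⟨v₀, hv⟩, fun l' v h hE => ?_⟩
          obtain ⟨rfl, h⟩ := List.append_inj' h rfl
          obtain rfl : v₀ = v := by simpa using h
          exact ⟨hf₁ ⟨v₀, hv⟩, fun hv => ⟨fun _ => rfl, fun h => absurd h hlt.not_ge⟩⟩
        · refine ⟨f₂ ⟨v₀, hv⟩, fun l' v h hE => ?_⟩
          obtain ⟨rfl, h⟩ := List.append_inj' h rfl
          obtain rfl : v₀ = v := by simpa using h
          exact ⟨hf₂ ⟨v₀, hv⟩, fun hv => ⟨fun h => absurd h hge.not_gt, fun _ => rfl⟩⟩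
      · obtain ⟨u, hu⟩ := G.succ v₀
        refine ⟨u, fun l' v h hE => ?_⟩
        obtain ⟨rfl, h⟩ := List.append_inj' h rfl
        obtain rfl : v₀ = v := by simpa using h
        exact ⟨hu, fun hv' => absurd hv' hv⟩
  choose σ hσ using hex
  refine ⟨σ, fun l v hv => (hσ _ l v rfl hv).1, fun π hπ hc => ?_⟩
  have hstep : ∀ i (_ : π i ∈ G.Eve) (hi : π i ∈ U),
      ((G.partialSum π i : ℝ) < a * i → π (i + 1) = f₁ ⟨π i, hi⟩) ∧
      (a * i ≤ (G.partialSum π i : ℝ) → π (i + 1) = f₂ ⟨π i, hi⟩) := by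
    intro i hiE hi
    obtain ⟨l, hlen, hl⟩ := exists_prefixList_eq π i
    have h := (hσ _ l _ hl hiE).2 hi
    have hps : G.partialSum (fun j => (prefixList π i).getD j G.init) i = G.partialSum π i := by
      refine Finset.sum_congr rfl fun j hj => ?_
      have hj := Finset.mem_range.1 hj
      beta_reduce
      rw [getD_prefixList π hj.le, getD_prefixList π (Nat.succ_le_of_lt hj)]
    rwa [hlen, hps, ← hc i hiE] at h
  have hin : ∀ i, π i ∈ U := by
    intro i
    induction i with
    | zero =>
      rw [hπ.1]
      exact h0
    | succ i ih =>
      by_cases hiE : π i ∈ G.Eve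
      · rcases lt_or_ge (G.partialSum π i : ℝ) (a * i) with hlt | hge
        · rw [(hstep i hiE ih).1 hlt]
          exact Subtype.coe_prop _
        · rw [(hstep i hiE ih).2 hge]
          exact Subtype.coe_prop _
      · exact hU.1 _ ih hiE _ (hπ.2 i)
  exact (G.restrict U hU h0).MP_mem_Icc_of_switching hab h₁ h₂
    (π := fun i => ⟨π i, hin i⟩) hπ.2
    (fun i h hE => Subtype.ext ((hstep i hE (hin i)).1 h))
    (fun i h hE => Subtype.ext ((hstep i hE (hin i)).2 h))

end GameGraph

/-! ### The trap of reachable vertices -/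

namespace GameGraph

/-- A finite prefix that respects `σ` extends to an infinite play that respects `σ`. -/
lemma exists_extension {V : Type} (G : GameGraph V) {σ : List V → V} (hσ : G.EveLegal σ)
    (π : ℕ → V) (n : ℕ) (hE : ∀ i < n, G.E (π i) (π (i + 1)))
    (hc : ∀ i < n, π i ∈ G.Eve → π (i + 1) = σ (prefixList π i)) :
    ∃ π' : ℕ → V, (∀ i ≤ n, π' i = π i) ∧ (∀ i, G.E (π' i) (π' (i + 1))) ∧
      G.ConsEve σ π' := by
  classical
  choose next hnext using G.succ
  obtain ⟨π', h0, hπ'⟩ := exists_generated (π 0) (fun l => if l.length ≤ n then π l.length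
    else if l.getLastD (π 0) ∈ G.Eve then σ l else next (l.getLastD (π 0)))
  have hstep : ∀ i, π' (i + 1) = if i < n then π (i + 1)
      else if π' i ∈ G.Eve then σ (prefixList π' i) else next (π' i) := by
    intro i
    obtain ⟨l, hlen, hl⟩ := exists_prefixList_eq π' i
    rw [hπ' i, hl]
    simp [hlen]
  have hagree : ∀ i ≤ n, π' i = π i := by
    intro i hi
    cases i with
    | zero => exact h0
    | succ i => rw [hstep i, if_pos (by omega)]
  refine ⟨π', hagree, fun i => ?_, fun i hi => ?_⟩
  · by_cases hin : i < n
    · rw [hagree i hin.le, hagree (i + 1) hin]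
      exact hE i hin
    · rw [hstep i, if_neg hin]
      split_ifs with hi
      · obtain ⟨l, -, hl⟩ := exists_prefixList_eq π' i
        rw [hl]
        exact hσ l _ hi
      · exact hnext _
  · by_cases hin : i < n
    · rw [hagree (i + 1) hin, prefixList_congr (fun j hj => hagree j (hj.trans hin.le))]
      exact hc i hin (hagree i hin.le ▸ hi)
    · rw [hstep i, if_neg hin, if_pos hi]

/-- The vertices occurring on plays from the initial vertex that are consistent with `σ`. -/
def reach {V : Type} (G : GameGraph V) (σ : List V → V) : Set V :=
  {v | ∃ π n, G.IsPlay π ∧ G.ConsEve σ π ∧ π n = v}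

lemma init_mem_reach {V : Type} (G : GameGraph V) {σ : List V → V} (hσ : G.EveLegal σ) :
    G.init ∈ G.reach σ := by
  obtain ⟨π, h0, hE, hc⟩ := G.exists_extension hσ (fun _ => G.init) 0 (by simp) (by simp)
  exact ⟨π, 0, ⟨h0 0 le_rfl, hE⟩, hc, h0 0 le_rfl⟩

lemma trap_reach {V : Type} (G : GameGraph V) {σ : List V → V} (hσ : G.EveLegal σ) :
    G.Trap (G.reach σ) := by
  constructor
  · rintro v ⟨π, n, hπ, hc, rfl⟩ hv u hu
    -- Deviate from `π` to `u` at step `n`, then continue with `σ`.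
    have hle : ∀ i ≤ n, Function.update π (n + 1) u i = π i := fun i hi =>
      Function.update_of_ne (by omega) _ _
    have hat : Function.update π (n + 1) u (n + 1) = u := Function.update_self ..
    obtain ⟨π', hag, hE', hc'⟩ := G.exists_extension hσ (Function.update π (n + 1) u) (n + 1)
      (by
        intro i hi
        rw [hle i (by omega)]
        rcases Nat.lt_succ_iff_lt_or_eq.1 hi with h | rfl
        · rw [hle (i + 1) h]
          exact hπ.2 i
        · rw [hat]
          exact hu)
      (by
        intro i hi hiE
        rw [hle i (by omega)] at hiE
        rcases Nat.lt_succ_iff_lt_or_eq.1 hi with h | rfl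
        · rw [hle (i + 1) h, prefixList_congr fun j hj => hle j (by omega)]
          exact hc i hiE
        · exact absurd hiE hv)
    refine ⟨π', n + 1, ⟨?_, hE'⟩, hc', by rw [hag _ le_rfl, hat]⟩
    rw [hag 0 (by omega), hle 0 (by omega)]
    exact hπ.1
  · rintro v ⟨π, n, hπ, hc, rfl⟩ -
    exact ⟨π (n + 1), ⟨π, n + 1, hπ, hc, rfl⟩, hπ.2 n⟩

/-- From every reachable vertex, Eve has a strategy inside the reachable subgame each of
whose plays has the mean-payoff of some play from the initial vertex consistent with `σ`:
she continues `σ` from a fixed history that leads to the vertex. -/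
lemma exists_residual {V : Type} [Finite V] (G : GameGraph V) {σ : List V → V}
    (hσ : G.EveLegal σ) (h0 : G.init ∈ G.reach σ) (v : G.reach σ) :
    ∃ σ' : List (G.reach σ) → G.reach σ,
      (G.restrict _ (G.trap_reach hσ) h0).EveLegal σ' ∧
      ∀ ρ, (G.restrict _ (G.trap_reach hσ) h0).IsPlayFrom v ρ →
        (G.restrict _ (G.trap_reach hσ) h0).ConsEve σ' ρ →
        ∃ π, G.IsPlay π ∧ G.ConsEve σ π ∧
          (G.restrict _ (G.trap_reach hσ) h0).MP ρ = G.MP π := by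
  obtain ⟨v, π, n, hπ, hc, rfl⟩ := v
  set pre : List V := List.ofFn (fun j : Fin n => π j) with hpre
  have hex : ∀ l : List (G.reach σ), ∃ u : G.reach σ,
      ∀ (l' : List (G.reach σ)) (v : G.reach σ), l = l' ++ [v] →
      (v : V) ∈ G.Eve → G.E v u ∧
        (σ (pre ++ l.map Subtype.val) ∈ G.reach σ → (u : V) = σ (pre ++ l.map Subtype.val)) := by
    intro l
    rcases l.eq_nil_or_concat with rfl | ⟨l₀, v₀, rfl⟩
    · exact ⟨⟨_, h0⟩, fun l' v h => by simp at h⟩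
    · rw [List.concat_eq_append]
      by_cases hcand : (v₀ : V) ∈ G.Eve ∧ σ (pre ++ (l₀ ++ [v₀]).map Subtype.val) ∈ G.reach σ
      · refine ⟨⟨_, hcand.2⟩, fun l' v h hE => ⟨?_, fun _ => rfl⟩⟩
        obtain ⟨rfl, h⟩ := List.append_inj' h rfl
        obtain rfl : v₀ = v := by simpa using h
        change G.E v₀ (σ (pre ++ (l₀ ++ [v₀]).map Subtype.val))
        rw [List.map_append, ← List.append_assoc]
        exact hσ _ _ hE
      · by_cases hE₀ : (v₀ : V) ∈ G.Eve
        · obtain ⟨u, hu, hvu⟩ := (G.trap_reach hσ).2 v₀ v₀.2 hE₀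
          refine ⟨⟨u, hu⟩, fun l' v h hE => ?_⟩
          obtain ⟨rfl, h⟩ := List.append_inj' h rfl
          obtain rfl : v₀ = v := by simpa using h
          exact ⟨hvu, fun hr => absurd ⟨hE, hr⟩ hcand⟩
        · refine ⟨v₀, fun l' v h hE => ?_⟩
          obtain ⟨rfl, h⟩ := List.append_inj' h rfl
          obtain rfl : v₀ = v := by simpa using h
          exact absurd hE hE₀
  choose σ' hσ' using hex
  refine ⟨σ', fun l v hv => (hσ' _ l v rfl hv).1, fun ρ hρ hρc => ?_⟩
  let π' : ℕ → V := fun i => if i < n then π i else ρ (i - n)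
  have hlt : ∀ i ≤ n, π' i = π i := by
    intro i hi
    rcases hi.lt_or_eq with h | rfl
    · exact if_pos h
    · simp only [π', lt_irrefl, if_false, Nat.sub_self, hρ.1]
  have hge : ∀ j, π' (n + j) = ρ j := by
    intro j
    simp [π']
  have hlist : ∀ j, prefixList π' (n + j) = pre ++ (prefixList ρ j).map Subtype.val := by
    intro j
    induction j with
    | zero =>
      simp only [prefixList, hpre, add_zero]
      rw [List.ofFn_succ_last]
      congr 1
      · congr 1
        funext i
        exact hlt i i.2.le
      · simpa using hge 0
    | succ j ih =>
      rw [← add_assoc, prefixList_succ, ih, prefixList_succ, List.map_append,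
        ← List.append_assoc]
      congr 2
      exact hge (j + 1)
  have hE' : ∀ i, G.E (π' i) (π' (i + 1)) := by
    intro i
    rcases lt_or_ge i n with h | h
    · rw [hlt i h.le, hlt (i + 1) h]
      exact hπ.2 i
    · obtain ⟨j, rfl⟩ := Nat.exists_eq_add_of_le h
      rw [hge, add_assoc, hge]
      exact hρ.2 j
  have hinit : π' 0 = G.init := (hlt 0 (Nat.zero_le n)).trans hπ.1
  have hc' : G.ConsEve σ π' := by
    intro i
    induction i using Nat.strong_induction_on with
    | _ i ih =>
      intro hiE
      rcases lt_or_ge i n with h | h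
      · rw [hlt (i + 1) h, prefixList_congr fun j hj => hlt j (hj.trans h.le)]
        exact hc i (hlt i h.le ▸ hiE)
      · -- The prefix up to `i` respects `σ`, so the move of `σ` stays in the reachable set
        -- and hence is the move of `σ'`.
        have hmem : σ (prefixList π' i) ∈ G.reach σ := by
          obtain ⟨π'', hag, hE'', hc''⟩ := G.exists_extension hσ π' i (fun j _ => hE' j) ih
          refine ⟨π'', i + 1, ⟨(hag 0 (Nat.zero_le i)).trans hinit, hE''⟩, hc'', ?_⟩
          rw [hc'' i (by rw [hag i le_rfl]; exact hiE), prefixList_congr hag]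
        obtain ⟨j, rfl⟩ := Nat.exists_eq_add_of_le h
        rw [hge] at hiE
        obtain ⟨l, -, hl⟩ := exists_prefixList_eq ρ j
        rw [hlist] at hmem ⊢
        rw [add_assoc, hge, hρc j hiE]
        exact (hσ' _ l _ hl hiE).2 hmem
  refine ⟨π', ⟨hinit, hE'⟩, hc', ?_⟩
  rw [← G.MP_shift π' n]
  simp only [hge]
  rfl

end GameGraph

/-- Eve wins the interval mean-payoff game `(G, [a, b])` iff there
is a trap `U` for Adam containing the initial vertex such that, in the induced
subgame `G|U`, from every vertex of `U` Eve has a strategy ensuring `MP(π) ≥ a` and a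
strategy ensuring `MP(π) ≤ b`. -/
theorem stmt8 {V : Type} [Fintype V] (G : GameGraph V) (a b : ℝ) (hab : a ≤ b) :
    G.EveWins (fun π => G.MP π ∈ Set.Icc a b) ↔
      ∃ (U : Set V) (hU : G.Trap U) (h0 : G.init ∈ U),
        ∀ v : U,
          (∃ σ : List U → U, (G.restrict U hU h0).EveLegal σ ∧
            ∀ π, (G.restrict U hU h0).IsPlayFrom v π →
              (G.restrict U hU h0).ConsEve σ π → a ≤ (G.restrict U hU h0).MP π) ∧
          (∃ σ : List U → U, (G.restrict U hU h0).EveLegal σ ∧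
            ∀ π, (G.restrict U hU h0).IsPlayFrom v π →
              (G.restrict U hU h0).ConsEve σ π → (G.restrict U hU h0).MP π ≤ b) := by
  constructor
  · rintro ⟨σ, hσ, hwin⟩
    refine ⟨G.reach σ, G.trap_reach hσ, G.init_mem_reach hσ, fun v => ?_⟩
    obtain ⟨σ', hσ', hres⟩ := G.exists_residual hσ (G.init_mem_reach hσ) v
    have hmem : ∀ ρ, (G.restrict _ (G.trap_reach hσ) (G.init_mem_reach hσ)).IsPlayFrom v ρ →
        (G.restrict _ (G.trap_reach hσ) (G.init_mem_reach hσ)).ConsEve σ' ρ →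
        (G.restrict _ (G.trap_reach hσ) (G.init_mem_reach hσ)).MP ρ ∈ Set.Icc a b := by
      intro ρ hρ hρc
      obtain ⟨π, hπ, hc, hMP⟩ := hres ρ hρ hρc
      rw [hMP]
      exact hwin π hπ hc
    exact ⟨⟨σ', hσ', fun ρ hρ hρc => (hmem ρ hρ hρc).1⟩,
      ⟨σ', hσ', fun ρ hρ hρc => (hmem ρ hρ hρc).2⟩⟩
  · rintro ⟨U, hU, h0, h⟩
    obtain ⟨f₁, f₂, hf₁, hf₂, h₁, h₂⟩ := (G.restrict U hU h0).exists_positional_pair h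
    exact G.eveWins_of_trap hab hU h0 hf₁ hf₂ h₁ h₂
end

section
/- Let (G, [a, b]) be a single-interval mean-payoff game, where [a, b] ⊆ ℝ is a closed bounded interval. If Adam has a winning strategy (a strategy such that every consistent play π satisfies MP(π) ∉ [a, b]) then he has a positional winning strategy. -/
/-!
Let Adam's good regions be the traps for Eve on which a positional strategy of his drives the
partial sums linearly below slope `a` or above slope `b` (`Good`). Take a maximal good region `R`.
If it contains the initial vertex, Adam wins positionally. Otherwise Eve defeats every strategy of
Adam, as follows.

By maximality the complement of `R` is an arena that Adam cannot leave. A mean-payoff dichotomy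
(`dich_on`) is applied there to the weights `w - a` and to `b - w`: either Eve has a potential
certifying that she can keep the accumulated weight bounded below from every vertex, or Adam has a
strict potential on a nonempty trap. In the second case following the potential is a positional
strategy, and the trap could be added to `R` (`Good.union_pot`). So Eve has both potentials. She
follows the first while the running average is below `a` and the second otherwise; this keeps the
`k`-th partial sum in `[a * k - C, b * k + C]` (`eve_play`), hence the mean payoff in `[a, b]`.

The dichotomy (`dich`) goes by induction on the number of edges. The moves out of a vertex `v` with
several successors are split between two sub-arenas. Two potentials of the player not owning `v`,
normalised to vanish at `v`, combine by a pointwise maximum or minimum; a potential of the owner of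
`v` in either sub-arena is already one in the whole arena (`dich_split`). When every vertex has one
successor, potentials are extremal partial sums along orbits (`dich_functional`).
-/

open Filter

namespace IntervalGame

/-! ### Potentials and the energy dichotomy -/

/-- `φ` certifies that Eve, owning `P`, can keep the accumulated `r`-weight bounded below:
along a suitable move of Eve, and along every move of Adam, `r`-weight plus `φ` does not
decrease. -/
def EvePot {α : Type} (E : α → α → Prop) (P : Set α) (r : α → α → ℝ) (φ : α → ℝ) : Prop :=
  ∀ x, (x ∈ P → ∃ u, E x u ∧ φ x ≤ r x u + φ u) ∧
    (x ∉ P → ∀ u, E x u → φ x ≤ r x u + φ u)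

/-- `ψ` certifies that Adam can keep the play inside `T` while the accumulated `r`-weight
decreases at rate at least `ε`: `T` is a trap for Eve, and along a suitable move of Adam, and along
every move of Eve, `r`-weight plus `ψ` drops by `ε`. -/
def AdamPot {α : Type} (E : α → α → Prop) (P : Set α) (r : α → α → ℝ) (T : Set α)
    (ψ : α → ℝ) (ε : ℝ) : Prop :=
  ∀ x ∈ T, (x ∉ P → ∃ u, u ∈ T ∧ E x u ∧ r x u + ψ u + ε ≤ ψ x) ∧
    (x ∈ P → ∀ u, E x u → u ∈ T ∧ r x u + ψ u + ε ≤ ψ x)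

/-- Either Eve has a potential on the whole arena, or Adam has a strict one on a nonempty trap. -/
def Dich {α : Type} (E : α → α → Prop) (P : Set α) (r : α → α → ℝ) : Prop :=
  (∃ φ, EvePot E P r φ) ∨
    ∃ T ψ ε, T.Nonempty ∧ 0 < ε ∧ AdamPot E P r T ψ ε

/-- The dichotomy when every vertex has the single successor `s x`: Eve's potential is the infimum
of the partial sums along the orbit, and where that infimum is `-∞`, Adam's potential is the
supremum of the partial sums of the weights raised by a small `ε`. -/
lemma dich_functional {α : Type} [Finite α] (E : α → α → Prop) (P : Set α)
    (r : α → α → ℝ) (s : α → α) (hs : ∀ x u, E x u ↔ u = s x) : Dich E P r := by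
  classical
  cases nonempty_fintype α
  set ρ : α → ℝ := fun x => r x (s x) with hρ
  by_cases hb : ∀ x, BddBelow (Set.range fun n => birkhoffSum s ρ n x)
  · left
    refine ⟨fun x => ⨅ n, birkhoffSum s ρ n x, ?_⟩
    have key : ∀ x, (⨅ n, birkhoffSum s ρ n x) ≤ ρ x + ⨅ n, birkhoffSum s ρ n (s x) := by
      intro x
      rw [← sub_le_iff_le_add']
      refine le_ciInf fun n => ?_
      have := ciInf_le (hb x) (n + 1)
      rw [birkhoffSum_succ'] at this
      linarith
    intro x
    refine ⟨fun _ => ⟨s x, (hs _ _).2 rfl, key x⟩, fun _ u hu => ?_⟩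
    obtain rfl := (hs _ _).1 hu
    exact key x
  · right
    push Not at hb
    set T : Set α := {x | ¬ BddBelow (Set.range fun n => birkhoffSum s ρ n x)} with hT
    have hTs : ∀ x ∈ T, s x ∈ T := by
      intro x hx hc
      apply hx
      obtain ⟨c, hc⟩ := hc
      refine ⟨min 0 (ρ x + c), ?_⟩
      rintro _ ⟨n, rfl⟩
      cases n with
      | zero => simp
      | succ n =>
        have := hc ⟨n, rfl⟩
        simp only [birkhoffSum_succ'] at *
        exact (min_le_right _ _).trans (by linarith)
    have hTi : ∀ n, ∀ x ∈ T, s^[n] x ∈ T := by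
      intro n
      induction n with
      | zero => intro x hx; simpa using hx
      | succ n ih => intro x hx; rw [Function.iterate_succ_apply]; exact ih _ (hTs x hx)
    have hex : ∀ x, ∃ n, x ∈ T → birkhoffSum s ρ n x ≤ -1 := by
      intro x
      by_cases hx : x ∈ T
      · by_contra! hcon
        apply hx
        refine ⟨-1, ?_⟩
        rintro _ ⟨n, rfl⟩
        exact (hcon n).2.le
      · exact ⟨0, fun h => absurd h hx⟩
    choose n hn using hex
    obtain ⟨N, hN⟩ : ∃ N, ∀ x, n x ≤ N :=
      ⟨∑ x, n x, fun x => Finset.single_le_sum (f := n) (fun _ _ => Nat.zero_le _)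
        (Finset.mem_univ x)⟩
    set ε : ℝ := 1 / ((N : ℝ) + 1) with hε
    have hεpos : 0 < ε := by positivity
    set ρ' : α → ℝ := fun x => ρ x + ε with hρ'
    have hsum : ∀ k x, birkhoffSum s ρ' k x = birkhoffSum s ρ k x + k * ε := by
      intro k x
      simp [birkhoffSum, hρ', Finset.sum_add_distrib]
    obtain ⟨M, hM0, hM⟩ : ∃ M : ℝ, 0 ≤ M ∧ ∀ x, ρ' x ≤ M :=
      ⟨∑ x, |ρ' x|, by positivity, fun x => (le_abs_self _).trans
        (Finset.single_le_sum (f := fun x => |ρ' x|) (fun _ _ => abs_nonneg _)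
          (Finset.mem_univ x))⟩
    have hbd : ∀ k, ∀ x ∈ T, birkhoffSum s ρ' k x ≤ N * M := by
      intro k
      induction k using Nat.strong_induction_on with
      | _ k ih =>
        intro x hx
        by_cases hk : k < n x
        · have h1 : birkhoffSum s ρ' k x ≤ k * M := by
            calc birkhoffSum s ρ' k x ≤ ∑ _i ∈ Finset.range k, M :=
                  Finset.sum_le_sum fun i _ => hM _
              _ = k * M := by simp
          have h2 : (k : ℝ) ≤ N := by exact_mod_cast hk.le.trans (hN x)
          nlinarith
        · push Not at hk
          obtain ⟨j, rfl⟩ := Nat.exists_eq_add_of_le hk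
          have hnx := hn x hx
          have hpos : 0 < n x := by
            rcases Nat.eq_zero_or_pos (n x) with h | h
            · rw [h] at hnx; simp at hnx; linarith
            · exact h
          rw [birkhoffSum_add, hsum (n x)]
          have h1 := ih j (by omega) _ (hTi (n x) x hx)
          have h2 : (n x : ℝ) * ε ≤ 1 := by
            rw [hε, mul_one_div, div_le_one (by positivity)]
            have : (n x : ℝ) ≤ N := by exact_mod_cast hN x
            linarith
          linarith
    have key : ∀ x ∈ T, r x (s x) + (⨆ k, birkhoffSum s ρ' k (s x)) + ε ≤
        ⨆ k, birkhoffSum s ρ' k x := by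
      intro x hx
      have : (⨆ k, birkhoffSum s ρ' k (s x)) ≤ (⨆ k, birkhoffSum s ρ' k x) - ρ' x := by
        refine ciSup_le fun k => ?_
        have hbx : BddAbove (Set.range fun k => birkhoffSum s ρ' k x) :=
          ⟨N * M, by rintro _ ⟨k, rfl⟩; exact hbd k x hx⟩
        have := le_ciSup hbx (k + 1)
        rw [birkhoffSum_succ'] at this
        linarith
      simp only [hρ', hρ] at this ⊢
      linarith
    refine ⟨T, fun x => ⨆ k, birkhoffSum s ρ' k x, ε, hb, hεpos, ?_⟩
    intro x hx
    refine ⟨fun _ => ⟨s x, hTs x hx, (hs _ _).2 rfl, key x hx⟩, fun _ u hu => ?_⟩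
    obtain rfl := (hs _ _).1 hu
    exact ⟨hTs x hx, key x hx⟩

/-- The induction step of the dichotomy: the moves out of one vertex `v` are split between two
sub-arenas. The player owning `v` inherits any certificate of a sub-arena; two certificates of the
opponent, normalised to vanish at `v`, combine by a pointwise maximum (Eve) or minimum (Adam). -/
lemma dich_split {α : Type} (E E₁ E₂ : α → α → Prop) (P : Set α)
    (r : α → α → ℝ) (v : α) (h₁ : ∀ x, x ≠ v → ∀ u, E₁ x u ↔ E x u)
    (h₂ : ∀ x, x ≠ v → ∀ u, E₂ x u ↔ E x u) (hv : ∀ u, E v u ↔ E₁ v u ∨ E₂ v u)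
    (d₁ : Dich E₁ P r) (d₂ : Dich E₂ P r) : Dich E P r := by
  classical
  have s₁ : ∀ x u, E₁ x u → E x u := by
    intro x u h
    by_cases hx : x = v
    · subst hx; exact (hv u).2 (Or.inl h)
    · exact (h₁ x hx u).1 h
  have s₂ : ∀ x u, E₂ x u → E x u := by
    intro x u h
    by_cases hx : x = v
    · subst hx; exact (hv u).2 (Or.inr h)
    · exact (h₂ x hx u).1 h
  by_cases hvP : v ∈ P
  -- A certificate of Eve survives adding moves of Eve.
  · have lift : ∀ E' : α → α → Prop, (∀ x, x ≠ v → ∀ u, E' x u ↔ E x u) →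
        (∀ x u, E' x u → E x u) → ∀ φ, EvePot E' P r φ → EvePot E P r φ := by
      intro E' hne hsub φ hφ x
      refine ⟨fun hx => ?_, fun hx u hu => ?_⟩
      · obtain ⟨u, hu, hle⟩ := (hφ x).1 hx
        exact ⟨u, hsub _ _ hu, hle⟩
      · have hxv : x ≠ v := by rintro rfl; exact hx hvP
        exact (hφ x).2 hx u ((hne x hxv u).2 hu)
    rcases d₁ with ⟨φ, hφ⟩ | ⟨T₁, ψ₁, ε₁, hT₁, hε₁, hA₁⟩
    · exact Or.inl ⟨φ, lift E₁ h₁ s₁ φ hφ⟩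
    rcases d₂ with ⟨φ, hφ⟩ | ⟨T₂, ψ₂, ε₂, hT₂, hε₂, hA₂⟩
    · exact Or.inl ⟨φ, lift E₂ h₂ s₂ φ hφ⟩
    right
    -- A trap avoiding `v` does not see the added moves.
    have avoid : ∀ E' : α → α → Prop, (∀ x, x ≠ v → ∀ u, E' x u ↔ E x u) →
        ∀ T ψ ε, v ∉ T → AdamPot E' P r T ψ ε → AdamPot E P r T ψ ε := by
      intro E' hne T ψ ε hvT hA x hx
      have hxv : x ≠ v := by rintro rfl; exact hvT hx
      refine ⟨fun hxP => ?_, fun hxP u hu => (hA x hx).2 hxP u ((hne x hxv u).2 hu)⟩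
      obtain ⟨u, huT, hu, hle⟩ := (hA x hx).1 hxP
      exact ⟨u, huT, (hne x hxv u).1 hu, hle⟩
    by_cases hv₁ : v ∈ T₁
    swap
    · exact ⟨T₁, ψ₁, ε₁, hT₁, hε₁, avoid E₁ h₁ _ _ _ hv₁ hA₁⟩
    by_cases hv₂ : v ∈ T₂
    swap
    · exact ⟨T₂, ψ₂, ε₂, hT₂, hε₂, avoid E₂ h₂ _ _ _ hv₂ hA₂⟩
    -- The minimum of the normalised potentials, each read as `+∞` off its own trap.
    let ψ : α → ℝ := fun x => if x ∈ T₁ then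
      (if x ∈ T₂ then min (ψ₁ x - ψ₁ v) (ψ₂ x - ψ₂ v) else ψ₁ x - ψ₁ v) else ψ₂ x - ψ₂ v
    have le₁ : ∀ x ∈ T₁, ψ x ≤ ψ₁ x - ψ₁ v := by
      intro x hx
      simp only [ψ, if_pos hx]
      split_ifs
      · exact min_le_left _ _
      · exact le_rfl
    have le₂ : ∀ x ∈ T₂, ψ x ≤ ψ₂ x - ψ₂ v := by
      intro x hx
      simp only [ψ, if_pos hx]
      split_ifs
      · exact min_le_right _ _
      · exact le_rfl
    have att : ∀ x ∈ T₁ ∪ T₂, (x ∈ T₁ ∧ ψ x = ψ₁ x - ψ₁ v) ∨ (x ∈ T₂ ∧ ψ x = ψ₂ x - ψ₂ v) := by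
      intro x hx
      by_cases hx1 : x ∈ T₁
      · by_cases hx2 : x ∈ T₂
        · simp only [ψ, if_pos hx1, if_pos hx2]
          rcases min_choice (ψ₁ x - ψ₁ v) (ψ₂ x - ψ₂ v) with h | h
          · exact Or.inl ⟨hx1, h⟩
          · exact Or.inr ⟨hx2, h⟩
        · exact Or.inl ⟨hx1, by simp only [ψ, if_pos hx1, if_neg hx2]⟩
      · exact Or.inr ⟨hx.resolve_left hx1, by simp only [ψ, if_neg hx1]⟩
    have hψv : ψ v = 0 := by simp [ψ, hv₁, hv₂]
    have hm₁ := min_le_left ε₁ ε₂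
    have hm₂ := min_le_right ε₁ ε₂
    refine ⟨T₁ ∪ T₂, ψ, min ε₁ ε₂, ⟨v, Or.inl hv₁⟩, lt_min hε₁ hε₂, ?_⟩
    intro x hx
    refine ⟨fun hxP => ?_, fun hxP u hu => ?_⟩
    · rcases att x hx with ⟨hxT, he⟩ | ⟨hxT, he⟩
      · obtain ⟨u, huT, hu, hle⟩ := (hA₁ x hxT).1 hxP
        exact ⟨u, Or.inl huT, s₁ _ _ hu, by have := le₁ u huT; linarith⟩
      · obtain ⟨u, huT, hu, hle⟩ := (hA₂ x hxT).1 hxP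
        exact ⟨u, Or.inr huT, s₂ _ _ hu, by have := le₂ u huT; linarith⟩
    · by_cases hxv : x = v
      · subst hxv
        rcases (hv u).1 hu with hu | hu
        · obtain ⟨huT, hle⟩ := (hA₁ x hv₁).2 hxP u hu
          exact ⟨Or.inl huT, by have := le₁ u huT; linarith⟩
        · obtain ⟨huT, hle⟩ := (hA₂ x hv₂).2 hxP u hu
          exact ⟨Or.inr huT, by have := le₂ u huT; linarith⟩
      · rcases att x hx with ⟨hxT, he⟩ | ⟨hxT, he⟩
        · obtain ⟨huT, hle⟩ := (hA₁ x hxT).2 hxP u ((h₁ x hxv u).2 hu)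
          exact ⟨Or.inl huT, by have := le₁ u huT; linarith⟩
        · obtain ⟨huT, hle⟩ := (hA₂ x hxT).2 hxP u ((h₂ x hxv u).2 hu)
          exact ⟨Or.inr huT, by have := le₂ u huT; linarith⟩
  -- A certificate of Adam survives adding moves of Adam.
  · have lift : ∀ E' : α → α → Prop, (∀ x, x ≠ v → ∀ u, E' x u ↔ E x u) →
        (∀ x u, E' x u → E x u) → ∀ T ψ ε, AdamPot E' P r T ψ ε → AdamPot E P r T ψ ε := by
      intro E' hne hsub T ψ ε hA x hx
      refine ⟨fun hxP => ?_, fun hxP u hu => ?_⟩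
      · obtain ⟨u, huT, hu, hle⟩ := (hA x hx).1 hxP
        exact ⟨u, huT, hsub _ _ hu, hle⟩
      · have hxv : x ≠ v := by rintro rfl; exact hvP hxP
        exact (hA x hx).2 hxP u ((hne x hxv u).2 hu)
    rcases d₁ with ⟨φ₁, hφ₁⟩ | ⟨T, ψ, ε, hT, hε, hA⟩
    swap
    · exact Or.inr ⟨T, ψ, ε, hT, hε, lift E₁ h₁ s₁ _ _ _ hA⟩
    rcases d₂ with ⟨φ₂, hφ₂⟩ | ⟨T, ψ, ε, hT, hε, hA⟩
    swap
    · exact Or.inr ⟨T, ψ, ε, hT, hε, lift E₂ h₂ s₂ _ _ _ hA⟩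
    left
    refine ⟨fun x => max (φ₁ x - φ₁ v) (φ₂ x - φ₂ v), fun x => ⟨fun hxP => ?_, fun hxP u hu => ?_⟩⟩
    · rcases max_choice (φ₁ x - φ₁ v) (φ₂ x - φ₂ v) with h | h
      · obtain ⟨u, hu, hle⟩ := (hφ₁ x).1 hxP
        refine ⟨u, s₁ _ _ hu, ?_⟩
        have := le_max_left (φ₁ u - φ₁ v) (φ₂ u - φ₂ v)
        linarith
      · obtain ⟨u, hu, hle⟩ := (hφ₂ x).1 hxP
        refine ⟨u, s₂ _ _ hu, ?_⟩
        have := le_max_right (φ₁ u - φ₁ v) (φ₂ u - φ₂ v)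
        linarith
    · have m₁ := le_max_left (φ₁ u - φ₁ v) (φ₂ u - φ₂ v)
      have m₂ := le_max_right (φ₁ u - φ₁ v) (φ₂ u - φ₂ v)
      by_cases hxv : x = v
      · subst hxv
        simp only [sub_self, max_self]
        rcases (hv u).1 hu with hu | hu
        · have := (hφ₁ x).2 hxP u hu
          linarith
        · have := (hφ₂ x).2 hxP u hu
          linarith
      · have b₁ := (hφ₁ x).2 hxP u ((h₁ x hxv u).2 hu)
        have b₂ := (hφ₂ x).2 hxP u ((h₂ x hxv u).2 hu)
        exact max_le (by linarith) (by linarith)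

/-- The energy dichotomy for arbitrary finite arenas, by induction on the number of edges. -/
lemma dich {α : Type} [Finite α] (P : Set α) (r : α → α → ℝ) :
    ∀ (m : ℕ) (E : α → α → Prop), (∀ x, ∃ u, E x u) →
      {p : α × α | E p.1 p.2}.ncard = m → Dich E P r := by
  classical
  intro m
  induction m using Nat.strong_induction_on with
  | _ m ih =>
    intro E hE hm
    by_cases hu : ∀ x u u', E x u → E x u' → u = u'
    · choose s hs using hE
      exact dich_functional E P r s
        fun x u => ⟨fun h => hu x _ _ h (hs x), fun h => h ▸ hs x⟩
    · push Not at hu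
      obtain ⟨v, u₁, u₂, hu₁, hu₂, hne⟩ := hu
      refine dich_split E (fun x u => E x u ∧ (x = v → u = u₁))
        (fun x u => E x u ∧ (x = v → u ≠ u₁)) P r v
        (fun x hx u => by simp [hx]) (fun x hx u => by simp [hx])
        (fun u => by by_cases h : u = u₁ <;> simp [h]) ?_ ?_
      · refine ih _ ?_ _ (fun x => ?_) rfl
        · rw [← hm]
          refine Set.ncard_lt_ncard ⟨fun p hp => hp.1, fun h => ?_⟩ (Set.toFinite _)
          exact hne ((h (show (v, u₂) ∈ {p : α × α | E p.1 p.2} from hu₂)).2 rfl).symm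
        · by_cases hx : x = v
          · exact ⟨u₁, hx ▸ hu₁, fun _ => rfl⟩
          · obtain ⟨u, hu⟩ := hE x
            exact ⟨u, hu, fun h => absurd h hx⟩
      · refine ih _ ?_ _ (fun x => ?_) rfl
        · rw [← hm]
          refine Set.ncard_lt_ncard ⟨fun p hp => hp.1, fun h => ?_⟩ (Set.toFinite _)
          exact (h (show (v, u₁) ∈ {p : α × α | E p.1 p.2} from hu₁)).2 rfl rfl
        · by_cases hx : x = v
          · exact ⟨u₂, hx ▸ hu₂, fun _ => hne.symm⟩
          · obtain ⟨u, hu⟩ := hE x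
            exact ⟨u, hu, fun h => absurd h hx⟩

/-- The dichotomy inside a subset `S` of the vertices in which no vertex is stuck. -/
lemma dich_on {V : Type} [Finite V] (E : V → V → Prop) (P : Set V) (r : V → V → ℝ) (S : Set V)
    (hE : ∀ x ∈ S, ∃ u ∈ S, E x u) :
    (∃ φ : V → ℝ, ∀ x ∈ S, (x ∈ P → ∃ u ∈ S, E x u ∧ φ x ≤ r x u + φ u) ∧
      (x ∉ P → ∀ u ∈ S, E x u → φ x ≤ r x u + φ u)) ∨
    ∃ (T : Set V) (ψ : V → ℝ) (ε : ℝ), T ⊆ S ∧ T.Nonempty ∧ 0 < ε ∧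
      ∀ x ∈ T, (x ∉ P → ∃ u ∈ T, E x u ∧ r x u + ψ u + ε ≤ ψ x) ∧
        (x ∈ P → ∀ u ∈ S, E x u → u ∈ T ∧ r x u + ψ u + ε ≤ ψ x) := by
  have ext : ∀ (φ : S → ℝ) (x : S), Function.extend Subtype.val φ 0 (x : V) = φ x :=
    fun φ x => Subtype.val_injective.extend_apply φ 0 x
  rcases dich (α := S) (Subtype.val ⁻¹' P) (fun x u => r x u) _ (fun x u => E x u)
    (fun x => by obtain ⟨u, hu, h⟩ := hE x x.2; exact ⟨⟨u, hu⟩, h⟩) rfl with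
    ⟨φ, hφ⟩ | ⟨T, ψ, ε, hT, hε, hA⟩
  · left
    refine ⟨Function.extend Subtype.val φ 0, fun x hx => ⟨fun hxP => ?_, fun hxP u hu hxu => ?_⟩⟩
    · obtain ⟨u, hu, hle⟩ := (hφ ⟨x, hx⟩).1 hxP
      exact ⟨u, u.2, hu, by rw [ext φ ⟨x, hx⟩, ext φ u]; exact hle⟩
    · rw [ext φ ⟨x, hx⟩, ext φ ⟨u, hu⟩]
      exact (hφ ⟨x, hx⟩).2 hxP ⟨u, hu⟩ hxu
  · right
    refine ⟨Subtype.val '' T, Function.extend Subtype.val ψ 0, ε, ?_, hT.image _, hε, ?_⟩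
    · rintro _ ⟨x, _, rfl⟩
      exact x.2
    · rintro _ ⟨x, hx, rfl⟩
      refine ⟨fun hxP => ?_, fun hxP u hu hxu => ?_⟩
      · obtain ⟨u, huT, hu, hle⟩ := (hA x hx).1 hxP
        exact ⟨u, ⟨u, huT, rfl⟩, hu, by rw [ext ψ x, ext ψ u]; exact hle⟩
      · obtain ⟨huT, hle⟩ := (hA x hx).2 hxP ⟨u, hu⟩ hxu
        exact ⟨⟨_, huT, rfl⟩, by rw [ext ψ x, ext ψ ⟨u, hu⟩]; exact hle⟩

/-! ### Mean-payoff bounds from linear bounds on partial sums -/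

variable {V : Type}

lemma exists_abs_w_le [Finite V] (G : GameGraph V) :
    ∃ M : ℝ, 0 ≤ M ∧ ∀ x u, |(G.w x u : ℝ)| ≤ M := by
  cases nonempty_fintype V
  refine ⟨∑ p : V × V, |(G.w p.1 p.2 : ℝ)|, by positivity, fun x u => ?_⟩
  exact Finset.single_le_sum (f := fun p : V × V => |(G.w p.1 p.2 : ℝ)|)
    (fun _ _ => abs_nonneg _) (Finset.mem_univ (x, u))

lemma abs_avg_le (G : GameGraph V) {M : ℝ} (hM0 : 0 ≤ M)
    (hM : ∀ x u, |(G.w x u : ℝ)| ≤ M) (π : ℕ → V) (k : ℕ) :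
    |(G.partialSum π k : ℝ) / k| ≤ M := by
  rcases Nat.eq_zero_or_pos k with rfl | hk
  · simpa using hM0
  · rw [abs_div, Nat.abs_cast, div_le_iff₀ (by exact_mod_cast hk)]
    unfold GameGraph.partialSum
    push_cast
    calc |∑ i ∈ Finset.range k, (G.w (π i) (π (i + 1)) : ℝ)|
        ≤ ∑ i ∈ Finset.range k, |(G.w (π i) (π (i + 1)) : ℝ)| := Finset.abs_sum_le_sum_abs _ _
      _ ≤ ∑ _i ∈ Finset.range k, M := Finset.sum_le_sum fun i _ => hM _ _
      _ = M * k := by simp [mul_comm]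

lemma tendsto_lin (c C : ℝ) : Tendsto (fun k : ℕ => c + C / (k : ℝ)) atTop (nhds c) := by
  simpa using (tendsto_const_div_atTop_nhds_zero_nat C).const_add c

lemma le_MP [Finite V] (G : GameGraph V) (π : ℕ → V) (c C : ℝ)
    (h : ∀ k : ℕ, c * k - C ≤ G.partialSum π k) : c ≤ G.MP π := by
  obtain ⟨M, hM0, hM⟩ := exists_abs_w_le G
  have hb := abs_avg_le G hM0 hM π
  have ht := tendsto_lin c (-C)
  rw [← ht.liminf_eq]
  refine liminf_le_liminf ?_ ht.isBoundedUnder_ge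
    (isBoundedUnder_of ⟨M, fun k => (abs_le.1 (hb k)).2⟩ :
      IsBoundedUnder (· ≤ ·) atTop _).isCoboundedUnder_ge
  filter_upwards [eventually_gt_atTop 0] with k hk
  have hk' : (0 : ℝ) < k := by exact_mod_cast hk
  rw [le_div_iff₀ hk', add_mul, div_mul_cancel₀ _ hk'.ne']
  linarith [h k]

lemma MP_le [Finite V] (G : GameGraph V) (π : ℕ → V) (c C : ℝ)
    (h : ∀ k : ℕ, (G.partialSum π k : ℝ) ≤ c * k + C) : G.MP π ≤ c := by
  obtain ⟨M, hM0, hM⟩ := exists_abs_w_le G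
  have hb := abs_avg_le G hM0 hM π
  have ht := tendsto_lin c C
  rw [← ht.liminf_eq]
  refine liminf_le_liminf ?_
    (isBoundedUnder_of ⟨-M, fun k => (abs_le.1 (hb k)).1⟩ : IsBoundedUnder (· ≥ ·) atTop _)
    ht.isBoundedUnder_le.isCoboundedUnder_ge
  filter_upwards [eventually_gt_atTop 0] with k hk
  have hk' : (0 : ℝ) < k := by exact_mod_cast hk
  rw [div_le_iff₀ hk', add_mul, div_mul_cancel₀ _ hk'.ne']
  linarith [h k]

/-! ### Regions won positionally by Adam -/

/-- The partial sums leave the cone of slopes `[a, b]` linearly, below `a` or above `b`. This is a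
prefix-independent strengthening of `MP π ∉ [a, b]`. -/
def Escapes (G : GameGraph V) (a b : ℝ) (π : ℕ → V) : Prop :=
  ∃ ε C : ℝ, 0 < ε ∧ ((∀ k : ℕ, (G.partialSum π k : ℝ) ≤ (a - ε) * k + C) ∨
    (∀ k : ℕ, (b + ε) * k - C ≤ G.partialSum π k))

lemma Escapes.not_mem [Finite V] {G : GameGraph V} {a b : ℝ} {π : ℕ → V}
    (h : Escapes G a b π) : ¬ G.MP π ∈ Set.Icc a b := by
  obtain ⟨ε, C, hε, h | h⟩ := h
  · intro hm
    linarith [MP_le G π _ C h, hm.1]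
  · intro hm
    linarith [le_MP G π _ C h, hm.2]

lemma escapes_of_tail {G : GameGraph V} {a b : ℝ} {π : ℕ → V}
    (h : Escapes G a b (fun i => π (i + 1))) : Escapes G a b π := by
  obtain ⟨ε, C, hε, h⟩ := h
  have hs : ∀ k, (G.partialSum π (k + 1) : ℝ) =
      G.partialSum (fun i => π (i + 1)) k + G.w (π 0) (π 1) := by
    intro k
    simp only [GameGraph.partialSum, Finset.sum_range_succ']
    push_cast
    ring
  have h0 : (G.partialSum π 0 : ℝ) = 0 := by simp [GameGraph.partialSum]
  -- The constant absorbs the first weight and the shift of the index by one.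
  refine ⟨ε, |C| + |(G.w (π 0) (π 1) : ℝ)| + |a - ε| + |b + ε|, hε, h.imp (fun h k => ?_)
    (fun h k => ?_)⟩
  all_goals
    have n1 := abs_nonneg C
    have n2 := abs_nonneg (G.w (π 0) (π 1) : ℝ)
    have n3 := abs_nonneg (a - ε)
    have n4 := abs_nonneg (b + ε)
    have l1 := le_abs_self C
    have l2 := abs_le.1 (le_refl |(G.w (π 0) (π 1) : ℝ)|)
    have l3 := abs_le.1 (le_refl |a - ε|)
    have l4 := abs_le.1 (le_refl |b + ε|)
    cases k with
    | zero => simp only [h0, Nat.cast_zero, mul_zero]; linarith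
    | succ k =>
      have := h k
      rw [hs]
      push_cast
      linarith

lemma escapes_of_suffix {G : GameGraph V} {a b : ℝ} (n : ℕ) : ∀ {π : ℕ → V},
    Escapes G a b (fun i => π (n + i)) → Escapes G a b π := by
  induction n with
  | zero => intro π h; simpa using h
  | succ n ih =>
    intro π h
    refine escapes_of_tail (ih ?_)
    have : (fun i => π (n + i + 1)) = fun i => π (n + 1 + i) := by
      funext i; congr 1; omega
    rw [this]
    exact h

/-- `R` is a trap for Eve on which some positional strategy of Adam keeps the play in `R` and makes
it escape `[a, b]`. -/
def Good (G : GameGraph V) (a b : ℝ) (R : Set V) : Prop :=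
  ∃ f : V → V, (∀ x ∈ R, x ∉ G.Eve → G.E x (f x) ∧ f x ∈ R) ∧
    (∀ x ∈ R, x ∈ G.Eve → ∀ u, G.E x u → u ∈ R) ∧
    ∀ π : ℕ → V, (∀ i, G.E (π i) (π (i + 1))) → π 0 ∈ R → G.ConsAdamPos f π → Escapes G a b π

/-- A good region may be enlarged by a set `T` on which Adam has a positional strategy such that
the play never leaves `R ∪ T`, and escapes if it stays in `T` forever. -/
lemma Good.union {G : GameGraph V} {a b : ℝ} {R T : Set V} (hR : Good G a b R)
    (g : V → V)
    (hA : ∀ x ∈ T, x ∉ G.Eve → G.E x (g x) ∧ g x ∈ R ∪ T)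
    (hE : ∀ x ∈ T, x ∈ G.Eve → ∀ u, G.E x u → u ∈ R ∪ T)
    (hT : ∀ π : ℕ → V, (∀ i, G.E (π i) (π (i + 1))) → (∀ i, π i ∈ T) → G.ConsAdamPos g π →
      Escapes G a b π) : Good G a b (R ∪ T) := by
  classical
  obtain ⟨f, hf, hfE, hfw⟩ := hR
  refine ⟨fun x => if x ∈ R then f x else g x, ?_, ?_, ?_⟩
  · rintro x hx hxE
    by_cases hxR : x ∈ R
    · simp only [if_pos hxR]
      exact ⟨(hf x hxR hxE).1, Or.inl (hf x hxR hxE).2⟩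
    · simp only [if_neg hxR]
      exact hA x (hx.resolve_left hxR) hxE
  · rintro x (hx | hx) hxE u hu
    · exact Or.inl (hfE x hx hxE u hu)
    · exact hE x hx hxE u hu
  · intro π hπ h0 hc
    by_cases hn : ∃ n, π n ∈ R
    · obtain ⟨n, hn⟩ := hn
      have hstay : ∀ i, π (n + i) ∈ R := by
        intro i
        induction i with
        | zero => exact hn
        | succ i ih =>
          by_cases hxE : π (n + i) ∈ G.Eve
          · exact hfE _ ih hxE _ (hπ _)
          · have := hc (n + i) hxE
            simp only [if_pos ih] at this
            rw [← add_assoc, this]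
            exact (hf _ ih hxE).2
      refine escapes_of_suffix n (hfw _ (fun i => hπ (n + i)) hn fun i hi => ?_)
      have := hc (n + i) hi
      simp only [if_pos (hstay i)] at this
      exact this
    · push Not at hn
      have hstay : ∀ i, π i ∈ T := by
        intro i
        induction i with
        | zero => exact h0.resolve_left (hn 0)
        | succ i ih =>
          by_cases hxE : π i ∈ G.Eve
          · exact (hE _ ih hxE _ (hπ _)).resolve_left (hn _)
          · have := hc i hxE
            simp only [if_neg (hn i)] at this
            exact (this ▸ (hA _ ih hxE).2 : π (i + 1) ∈ R ∪ T).resolve_left (hn _)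
      refine hT π hπ hstay fun i hi => ?_
      have := hc i hi
      simp only [if_neg (hn i)] at this
      exact this

/-- Adam's strict potential on a trap `T` of the arena outside `R` makes `R ∪ T` good, provided a
linear decrease of the `r`-weight amounts to escaping `[a, b]`. -/
lemma Good.union_pot [Finite V] {G : GameGraph V} {a b : ℝ} {R T : Set V} (hR : Good G a b R)
    (hTS : T ⊆ Rᶜ) (r : V → V → ℝ) (ψ : V → ℝ) (ε : ℝ)
    (hψ : ∀ x ∈ T, (x ∉ G.Eve → ∃ u ∈ T, G.E x u ∧ r x u + ψ u + ε ≤ ψ x) ∧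
      (x ∈ G.Eve → ∀ u ∈ Rᶜ, G.E x u → u ∈ T ∧ r x u + ψ u + ε ≤ ψ x))
    (hr : ∀ (π : ℕ → V) (C : ℝ),
      (∀ k : ℕ, ∑ i ∈ Finset.range k, r (π i) (π (i + 1)) ≤ C - ε * k) → Escapes G a b π) :
    Good G a b (R ∪ T) := by
  classical
  cases nonempty_fintype V
  have hex : ∀ x, ∃ u, x ∈ T → x ∉ G.Eve → u ∈ T ∧ G.E x u ∧ r x u + ψ u + ε ≤ ψ x := by
    intro x
    by_cases h : x ∈ T ∧ x ∉ G.Eve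
    · obtain ⟨u, hu⟩ := (hψ x h.1).1 h.2
      exact ⟨u, fun _ _ => hu⟩
    · exact ⟨x, fun h1 h2 => absurd ⟨h1, h2⟩ h⟩
  choose g hg using hex
  refine hR.union g (fun x hx hxE => ⟨(hg x hx hxE).2.1,
    Or.inr (hg x hx hxE).1⟩) (fun x hx hxE u hu => ?_) (fun π hπ hT hc => ?_)
  · by_cases huR : u ∈ R
    · exact Or.inl huR
    · exact Or.inr ((hψ x hx).2 hxE u huR hu).1
  · have hstep : ∀ i, r (π i) (π (i + 1)) + ψ (π (i + 1)) + ε ≤ ψ (π i) := by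
      intro i
      by_cases hxE : π i ∈ G.Eve
      · exact ((hψ _ (hT i)).2 hxE _ (hTS (hT _)) (hπ i)).2
      · rw [hc i hxE]
        exact (hg _ (hT i) hxE).2.2
    have hsum : ∀ k : ℕ, ∑ i ∈ Finset.range k, r (π i) (π (i + 1)) ≤
        ψ (π 0) - ψ (π k) - ε * k := by
      intro k
      induction k with
      | zero => simp
      | succ k ih =>
        rw [Finset.sum_range_succ]
        push_cast
        linarith [hstep k]
    refine hr π (ψ (π 0) + ∑ x, |ψ x|) fun k => ?_
    have h1 : |ψ (π k)| ≤ ∑ x, |ψ x| :=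
      Finset.single_le_sum (f := fun x => |ψ x|) (fun _ _ => abs_nonneg _) (Finset.mem_univ _)
    linarith [hsum k, (abs_le.1 h1).1]

/-! ### Eve's winning strategy outside a maximal good region -/

/-- If `X + φ` does not decrease while `X` is negative, and steps of `X` and values of `φ` are
bounded, then `X` is bounded below. -/
lemma bounded_below_of_potential (X φ : ℕ → ℝ) (L M : ℝ) (hφ : ∀ n, |φ n| ≤ L) (hM0 : 0 ≤ M)
    (h0 : X 0 = 0) (hM : ∀ n, -M ≤ X (n + 1) - X n)
    (hstep : ∀ n, X n < 0 → X n + φ n ≤ X (n + 1) + φ (n + 1)) (n : ℕ) :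
    -(2 * L + M) ≤ X n := by
  have key : ∀ n, -(L + M) ≤ X n + φ n := by
    intro n
    induction n with
    | zero => linarith [(abs_le.1 (hφ 0)).1]
    | succ n ih =>
      rcases lt_or_ge (X n) 0 with h | h
      · linarith [hstep n h]
      · linarith [hM n, (abs_le.1 (hφ (n + 1))).1]
  linarith [key n, (abs_le.1 (hφ n)).2]

lemma prefixList_succ (π : ℕ → V) (i : ℕ) :
    GameGraph.prefixList π (i + 1) = GameGraph.prefixList π i ++ [π (i + 1)] := by
  unfold GameGraph.prefixList
  rw [List.ofFn_succ']
  simp [List.concat_eq_append]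

/-- On a set `S` that Adam cannot leave and that carries Eve's potentials both for `w - a` and for
`b - w`, no strategy of Adam keeps the mean payoff off `[a, b]`: Eve follows the first potential
while the running average is below `a`, and the second one otherwise. -/
lemma eve_play [Finite V] (G : GameGraph V) (a b : ℝ) (hab : a ≤ b) (S : Set V)
    (hinit : G.init ∈ S) (hSA : ∀ x ∈ S, x ∉ G.Eve → ∀ u, G.E x u → u ∈ S) (φ₁ φ₂ : V → ℝ)
    (h₁ : ∀ x ∈ S, (x ∈ G.Eve → ∃ u ∈ S, G.E x u ∧ φ₁ x ≤ (G.w x u - a) + φ₁ u) ∧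
      (x ∉ G.Eve → ∀ u ∈ S, G.E x u → φ₁ x ≤ (G.w x u - a) + φ₁ u))
    (h₂ : ∀ x ∈ S, (x ∈ G.Eve → ∃ u ∈ S, G.E x u ∧ φ₂ x ≤ (b - G.w x u) + φ₂ u) ∧
      (x ∉ G.Eve → ∀ u ∈ S, G.E x u → φ₂ x ≤ (b - G.w x u) + φ₂ u))
    (σ : List V → V) (hσ : G.AdamLegal σ) :
    ∃ π, G.IsPlay π ∧ G.ConsAdam σ π ∧ G.MP π ∈ Set.Icc a b := by
  classical
  cases nonempty_fintype V
  have hex₁ : ∀ x, ∃ u, x ∈ S → x ∈ G.Eve → u ∈ S ∧ G.E x u ∧ φ₁ x ≤ (G.w x u - a) + φ₁ u := by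
    intro x
    by_cases h : x ∈ S ∧ x ∈ G.Eve
    · obtain ⟨u, hu⟩ := (h₁ x h.1).1 h.2
      exact ⟨u, fun _ _ => hu⟩
    · exact ⟨x, fun h1 h2 => absurd ⟨h1, h2⟩ h⟩
  have hex₂ : ∀ x, ∃ u, x ∈ S → x ∈ G.Eve → u ∈ S ∧ G.E x u ∧ φ₂ x ≤ (b - G.w x u) + φ₂ u := by
    intro x
    by_cases h : x ∈ S ∧ x ∈ G.Eve
    · obtain ⟨u, hu⟩ := (h₂ x h.1).1 h.2
      exact ⟨u, fun _ _ => hu⟩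
    · exact ⟨x, fun h1 h2 => absurd ⟨h1, h2⟩ h⟩
  choose g₁ hg₁ using hex₁
  choose g₂ hg₂ using hex₂
  -- A state consists of the past vertices, the current vertex, and the sum of `w - a` so far.
  let next : List V × V × ℝ → V := fun t =>
    if t.2.1 ∈ G.Eve then (if t.2.2 < 0 then g₁ t.2.1 else g₂ t.2.1) else σ (t.1 ++ [t.2.1])
  let st : ℕ → List V × V × ℝ := fun n => Nat.rec ([], G.init, 0)
    (fun _ t => (t.1 ++ [t.2.1], next t, t.2.2 + (G.w t.2.1 (next t) - a))) n
  let π : ℕ → V := fun n => (st n).2.1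
  have hst : ∀ n, st (n + 1) =
      ((st n).1 ++ [π n], next (st n), (st n).2.2 + (G.w (π n) (next (st n)) - a)) :=
    fun n => rfl
  have hπs : ∀ n, π (n + 1) = next (st n) := fun n => rfl
  have hpre : ∀ n, GameGraph.prefixList π n = (st n).1 ++ [π n] := by
    intro n
    induction n with
    | zero => simp [GameGraph.prefixList, st]
    | succ n ih => rw [prefixList_succ, ih, hst]
  have hD : ∀ n, (st n).2.2 = G.partialSum π n - a * n := by
    intro n
    induction n with
    | zero => simp [GameGraph.partialSum, st]
    | succ n ih =>
      rw [hst]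
      simp only [ih, GameGraph.partialSum, Finset.sum_range_succ, ← hπs]
      push_cast
      ring
  have hcons : G.ConsAdam σ π := by
    intro n hn
    rw [hpre, hπs]
    exact if_neg hn
  have hEve : ∀ n, π n ∈ G.Eve →
      π (n + 1) = if (G.partialSum π n : ℝ) - a * n < 0 then g₁ (π n) else g₂ (π n) := by
    intro n hn
    rw [← hD, hπs]
    exact if_pos hn
  have hstep : ∀ n, π n ∈ S → π (n + 1) ∈ S ∧ G.E (π n) (π (n + 1)) := by
    intro n hn
    by_cases hE : π n ∈ G.Eve
    · rw [hEve n hE]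
      split_ifs
      · exact ⟨(hg₁ _ hn hE).1, (hg₁ _ hn hE).2.1⟩
      · exact ⟨(hg₂ _ hn hE).1, (hg₂ _ hn hE).2.1⟩
    · have he : G.E (π n) (π (n + 1)) := by
        rw [hcons n hE, hpre]
        exact hσ _ _ hE
      exact ⟨hSA _ hn hE _ he, he⟩
  have hS : ∀ n, π n ∈ S := by
    intro n
    induction n with
    | zero => exact hinit
    | succ n ih => exact (hstep n ih).1
  obtain ⟨M, hM0, hM⟩ := exists_abs_w_le G
  have hbd : ∀ φ : V → ℝ, ∀ n, |φ (π n)| ≤ ∑ x, |φ x| := fun φ n =>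
    Finset.single_le_sum (f := fun x => |φ x|) (fun _ _ => abs_nonneg _) (Finset.mem_univ _)
  have hps : ∀ n, (G.partialSum π (n + 1) : ℝ) = G.partialSum π n + G.w (π n) (π (n + 1)) := by
    intro n
    simp [GameGraph.partialSum, Finset.sum_range_succ]
  have h0 : (G.partialSum π 0 : ℝ) = 0 := by simp [GameGraph.partialSum]
  refine ⟨π, ⟨rfl, fun n => (hstep n (hS n)).2⟩, hcons, ?_, ?_⟩
  · have := bounded_below_of_potential (fun n => (G.partialSum π n : ℝ) - a * n)
      (fun n => φ₁ (π n)) _ (M + |a|) (hbd φ₁) (by positivity) (by simp [h0])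
      (fun n => by
        simp only [hps]
        push_cast
        linarith [(abs_le.1 (hM (π n) (π (n + 1)))).1, le_abs_self a])
      (fun n hn => by
        simp only [hps]
        push_cast
        have : φ₁ (π n) ≤ (G.w (π n) (π (n + 1)) - a) + φ₁ (π (n + 1)) := by
          by_cases hE : π n ∈ G.Eve
          · rw [hEve n hE, if_pos hn]
            exact (hg₁ _ (hS n) hE).2.2
          · exact (h₁ _ (hS n)).2 hE _ (hS (n + 1)) (hstep n (hS n)).2
        linarith)
    exact le_MP G π a (2 * ∑ x, |φ₁ x| + (M + |a|)) fun k => by linarith [this k]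
  · have := bounded_below_of_potential (fun n => b * n - (G.partialSum π n : ℝ))
      (fun n => φ₂ (π n)) _ (M + |b|) (hbd φ₂) (by positivity) (by simp [h0])
      (fun n => by
        simp only [hps]
        push_cast
        linarith [(abs_le.1 (hM (π n) (π (n + 1)))).2, neg_abs_le b])
      (fun n hn => by
        simp only [hps]
        push_cast
        have hge : ¬ ((G.partialSum π n : ℝ) - a * n < 0) := by
          have : a * (n : ℝ) ≤ b * n := by gcongr
          linarith
        have : φ₂ (π n) ≤ (b - G.w (π n) (π (n + 1))) + φ₂ (π (n + 1)) := by
          by_cases hE : π n ∈ G.Eve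
          · rw [hEve n hE, if_neg hge]
            exact (hg₂ _ (hS n) hE).2.2
          · exact (h₂ _ (hS n)).2 hE _ (hS (n + 1)) (hstep n (hS n)).2
        linarith)
    exact MP_le G π b (2 * ∑ x, |φ₂ x| + (M + |b|)) fun k => by linarith [this k]

/-- A single vertex from which Adam forces a move into a good region can be added to it. -/
lemma Good.insert {G : GameGraph V} {a b : ℝ} {R : Set V} (hR : Good G a b R) (x : V)
    (hx : x ∉ R) (hA : x ∉ G.Eve → ∃ u ∈ R, G.E x u)
    (hE : x ∈ G.Eve → ∀ u, G.E x u → u ∈ R) : Good G a b (R ∪ {x}) := by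
  obtain ⟨u, hu⟩ : ∃ u, x ∉ G.Eve → u ∈ R ∧ G.E x u := by
    by_cases h : x ∈ G.Eve
    · exact ⟨x, fun h' => absurd h h'⟩
    · obtain ⟨u, hu⟩ := hA h
      exact ⟨u, fun _ => hu⟩
  refine hR.union (fun _ => u) ?_ ?_ ?_
  · rintro y rfl hy
    exact ⟨(hu hy).2, Or.inl (hu hy).1⟩
  · rintro y rfl hy v hv
    exact Or.inl (hE hy v hv)
  -- The play cannot stay at `x`: its successor lies in `R`.
  · intro π hπ hT hc
    exfalso
    have e0 : π 0 = x := hT 0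
    have e1 : π 1 = x := hT 1
    apply hx
    by_cases h : x ∈ G.Eve
    · exact hE h x (by simpa [e0, e1] using hπ 0)
    · have := hc 0 (e0 ▸ h)
      simp only [zero_add, e1] at this
      rw [this]
      exact (hu h).1

end IntervalGame

open IntervalGame

/-- In a single-interval mean-payoff game `(G, [a, b])`, if Adam
has a winning strategy (ensuring `MP(π) ∉ [a, b]` for every consistent play), then he
has a positional winning strategy. -/
theorem stmt9 {V : Type} [Fintype V] (G : GameGraph V) (a b : ℝ) (hab : a ≤ b) :
    G.AdamWins (fun π => G.MP π ∈ Set.Icc a b) →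
      G.AdamWinsPos (fun π => G.MP π ∈ Set.Icc a b) := by
  classical
  rintro ⟨σ, hσ, hσw⟩
  have hempty : Good G a b ∅ :=
    ⟨id, fun x hx => absurd hx (by simp), fun x hx => absurd hx (by simp),
      fun π _ h => absurd h (by simp)⟩
  obtain ⟨R, hR⟩ := (Set.toFinite {R : Set V | Good G a b R}).exists_maximal ⟨∅, hempty⟩
  have hmax : ∀ T : Set V, Good G a b (R ∪ T) → T ⊆ R := fun T hT =>
    Set.subset_union_right.trans (hR.2 hT Set.subset_union_left)
  by_cases hi : G.init ∈ R
  · obtain ⟨f, hf, hfE, hfw⟩ := hR.1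
    choose s hs using G.succ
    refine ⟨fun x => if x ∈ R then f x else s x, fun x hx => ?_, fun π hπ hc => ?_⟩
    · dsimp only
      split_ifs with h
      · exact (hf x h hx).1
      · exact hs x
    · have h0 : π 0 ∈ R := hπ.1 ▸ hi
      have hstay : ∀ i, π i ∈ R := by
        intro i
        induction i with
        | zero => exact h0
        | succ i ih =>
          by_cases hxE : π i ∈ G.Eve
          · exact hfE _ ih hxE _ (hπ.2 _)
          · have := hc i hxE
            simp only [if_pos ih] at this
            rw [this]
            exact (hf _ ih hxE).2
      refine (hfw π hπ.2 h0 fun i hi' => ?_).not_mem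
      have := hc i hi'
      simp only [if_pos (hstay i)] at this
      exact this
  · exfalso
    -- By maximality the complement of `R` is an arena that Adam cannot leave.
    have hSA : ∀ x ∈ Rᶜ, x ∉ G.Eve → ∀ u, G.E x u → u ∈ Rᶜ := by
      intro x hx hxE u hu huR
      exact hx (hmax {x} (Good.insert hR.1 x hx (fun _ => ⟨u, huR, hu⟩)
        (fun h => absurd h hxE)) rfl)
    have hSE : ∀ x ∈ Rᶜ, ∃ u ∈ Rᶜ, G.E x u := by
      intro x hx
      by_cases hxE : x ∈ G.Eve
      · by_contra! hcon
        exact hx (hmax {x} (Good.insert hR.1 x hx (fun h => absurd hxE h)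
          (fun _ u hu => by_contra fun h => hcon u h hu)) rfl)
      · obtain ⟨u, hu⟩ := G.succ x
        exact ⟨u, hSA x hx hxE u hu, hu⟩
    have hpot : ∀ r : V → V → ℝ, (∀ (ε C : ℝ) (π : ℕ → V), 0 < ε →
        (∀ k : ℕ, ∑ i ∈ Finset.range k, r (π i) (π (i + 1)) ≤ C - ε * k) → Escapes G a b π) →
        ∃ φ : V → ℝ, ∀ x ∈ Rᶜ, (x ∈ G.Eve → ∃ u ∈ Rᶜ, G.E x u ∧ φ x ≤ r x u + φ u) ∧
          (x ∉ G.Eve → ∀ u ∈ Rᶜ, G.E x u → φ x ≤ r x u + φ u) := by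
      intro r hr
      rcases dich_on G.E G.Eve r Rᶜ hSE with h | ⟨T, ψ, ε, hTS, ⟨x, hx⟩, hε, hψ⟩
      · exact h
      · exact absurd (hmax T (Good.union_pot hR.1 hTS r ψ ε hψ
          fun π C h => hr ε C π hε h) hx) (hTS hx)
    obtain ⟨φ₁, h₁⟩ := hpot (fun x u => G.w x u - a) fun ε C π hε h =>
      ⟨ε, C, hε, Or.inl fun k => by
        have := h k
        simp only [Finset.sum_sub_distrib, Finset.sum_const, Finset.card_range,
          nsmul_eq_mul] at this
        simp only [GameGraph.partialSum]
        push_cast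
        linarith⟩
    obtain ⟨φ₂, h₂⟩ := hpot (fun x u => b - G.w x u) fun ε C π hε h =>
      ⟨ε, C, hε, Or.inr fun k => by
        have := h k
        simp only [Finset.sum_sub_distrib, Finset.sum_const, Finset.card_range,
          nsmul_eq_mul] at this
        simp only [GameGraph.partialSum]
        push_cast
        linarith⟩
    obtain ⟨π, hπ, hc, hm⟩ := eve_play G a b hab Rᶜ hi hSA φ₁ φ₂ h₁ h₂ σ hσ
    exact hσw π hπ hc hm
end

section
/- Let λ ∈ (0, 1), let t ∈ ℕ, and let (a_1, a_1'), …, (a_n, a_n') be pairs of natural numbers defining a subset sum game: in round i (for i = 1, …, n), Adam if i is odd and Eve if i is even chooses one element of the pair (a_i, a_i'), and Eve wins if and only if the sum of the n chosen numbers equals t. Construct the interval discounted sum game with vertices v_1, …, v_{n+1}, initial vertex v_1, V_∃ = {v_i : i even}, two parallel edges from v_i to v_{i+1} of weights a_i / λ^{i−1} and a_i' / λ^{i−1} for 1 ≤ i ≤ n, a self-loop of weight 0 on v_{n+1}, discount factor λ, and winning set I = (t − 1, t + 1). Then Eve has a winning strategy in the subset sum game if and only if Eve has a winning strategy in this interval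 discounted sum game (a strategy ensuring DS_λ(π) ∈ I for every consistent play π). -/
/-!
A play of the discounted sum game traverses the vertices `0, 1, …, n` in order and then loops
forever on the last one, so it amounts to a sequence of bits saying which of the two parallel edges
is taken at each step (`G13.eq_edge_of_isPlay`). The factor `λ ^ i` of the discounted sum cancels
the denominator of the weight of the `i`-th edge, so the discounted sum of a play is the natural
number obtained by summing the chosen elements (`G13.DS_edge`); such a number lies in
`(t - 1, t + 1)` iff it equals `t`. Strategies are carried over through the same correspondence:
a list of bits is turned into a list of edges by `G13.edge`, and back by `G13.bit`.
-/

open Filter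

/-- A game graph given by a set `E` of directed edges (parallel edges allowed) over
the vertex set `V`: every vertex has an outgoing edge, `w` is the weight function,
`Eve` is the set of Eve's vertices and `init` is the initial vertex. -/
structure EdgeGame (V : Type) (E : Type) where
  src : E → V
  tgt : E → V
  w : E → ℚ
  Eve : Set V
  init : V
  succ : ∀ v, ∃ e, src e = v

namespace EdgeGame

variable {V E : Type}

/-- A play is an infinite sequence of edges forming a path from the initial vertex. -/
def IsPlay (G : EdgeGame V E) (ρ : ℕ → E) : Prop :=
  G.src (ρ 0) = G.init ∧ ∀ i, G.src (ρ (i + 1)) = G.tgt (ρ i)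

/-- The prefix `ρ 0, …, ρ i` of a play, as a list of edges. -/
def prefixList (ρ : ℕ → E) (i : ℕ) : List E :=
  List.ofFn (fun j : Fin (i + 1) => ρ j)

/-- A strategy for Eve (mapping play prefixes to the next edge) is legal if it
always proposes an outgoing edge of the current (Eve) vertex. -/
def EveLegal (G : EdgeGame V E) (σ : List E → E) : Prop :=
  (G.init ∈ G.Eve → G.src (σ []) = G.init) ∧
  ∀ (l : List E) (e : E), G.tgt e ∈ G.Eve → G.src (σ (l ++ [e])) = G.tgt e

/-- The play `ρ` is consistent with Eve's strategy `σ`. -/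
def ConsEve (G : EdgeGame V E) (σ : List E → E) (ρ : ℕ → E) : Prop :=
  (G.init ∈ G.Eve → ρ 0 = σ []) ∧
  ∀ i, G.tgt (ρ i) ∈ G.Eve → ρ (i + 1) = σ (prefixList ρ i)

/-- Eve has a winning strategy for the objective `Win`. -/
def EveWins (G : EdgeGame V E) (Win : (ℕ → E) → Prop) : Prop :=
  ∃ σ : List E → E, G.EveLegal σ ∧ ∀ ρ, G.IsPlay ρ → G.ConsEve σ ρ → Win ρ

/-- Eve has a positional (memoryless) winning strategy. -/
def EveWinsPos (G : EdgeGame V E) (Win : (ℕ → E) → Prop) : Prop :=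
  ∃ f : V → E, (∀ v ∈ G.Eve, G.src (f v) = v) ∧
    ∀ ρ, G.IsPlay ρ →
      ((G.init ∈ G.Eve → ρ 0 = f G.init) ∧
        ∀ i, G.tgt (ρ i) ∈ G.Eve → ρ (i + 1) = f (G.tgt (ρ i))) → Win ρ

/-- The run of the memory structure `(δ, m)` of a finite-state machine while
reading the edges of the play `ρ`. -/
def memRun {M : Type} (δ : M → E → M) (m : M) (ρ : ℕ → E) : ℕ → M
  | 0 => m
  | i + 1 => δ (memRun δ m ρ i) (ρ i)

/-- Eve has a finite-memory winning strategy, i.e. one computed by a finite-state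
machine reading the play. -/
def EveWinsFM (G : EdgeGame V E) (Win : (ℕ → E) → Prop) : Prop :=
  ∃ (M : Type) (_ : Fintype M) (m0 : M) (δ : M → E → M) (o : M → V → E),
    (∀ m, ∀ v ∈ G.Eve, G.src (o m v) = v) ∧
    ∀ ρ, G.IsPlay ρ →
      ((G.init ∈ G.Eve → ρ 0 = o m0 G.init) ∧
        ∀ i, G.tgt (ρ i) ∈ G.Eve →
          ρ (i + 1) = o (memRun δ m0 ρ (i + 1)) (G.tgt (ρ i))) → Win ρ

/-- The discounted sum of a play, with discount factor `lam`. -/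
noncomputable def DS (G : EdgeGame V E) (lam : ℝ) (ρ : ℕ → E) : ℝ :=
  ∑' i : ℕ, lam ^ i * (G.w (ρ i) : ℝ)

end EdgeGame
/-- Eve wins the subset sum game with target `t` and pairs `(a i, a' i)`: in round
`i` (1-based `i+1` for `i : Fin n`), Adam chooses if the round number is odd and Eve
chooses if it is even; the choice `b i = true` selects `a i` and `b i = false`
selects `a' i`. Eve wins iff the sum of the chosen numbers is exactly `t`. -/
def SSGEveWins (n t : ℕ) (a a' : Fin n → ℕ) : Prop :=
  ∃ σ : List Bool → Bool,
    ∀ b : Fin n → Bool,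
      (∀ i : Fin n, Even (i.1 + 1) →
        b i = σ (List.ofFn (fun j : Fin i.1 => b ⟨j.1, j.2.trans i.2⟩))) →
      (∑ i : Fin n, if b i then a i else a' i) = t

/-- The interval discounted sum game of Figure 4, associated with a subset sum game:
vertices `0, 1, …, n` (`0`-based, so vertex `i` is `v_{i+1}` of the paper), with two
parallel edges from `i` to `i+1` of weights `a_{i+1} / λ^i` and `a'_{i+1} / λ^i`, and
a self-loop of weight `0` on the last vertex. Vertex `i` belongs to Eve iff the round
number `i+1` is even. -/
def G13 (n : ℕ) (a a' : Fin n → ℕ) (lam : ℚ) :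
    EdgeGame (Fin (n + 1)) ((Fin n × Bool) ⊕ Unit) where
  src e :=
    match e with
    | Sum.inl (i, _) => i.castSucc
    | Sum.inr _ => Fin.last n
  tgt e :=
    match e with
    | Sum.inl (i, _) => i.succ
    | Sum.inr _ => Fin.last n
  w e :=
    match e with
    | Sum.inl (i, b) => (if b then (a i : ℚ) else (a' i : ℚ)) / lam ^ i.1
    | Sum.inr _ => 0
  Eve := {v : Fin (n + 1) | Odd v.1}
  init := 0
  succ := by
    intro v
    by_cases h : v.1 < n
    · exact ⟨Sum.inl (⟨v.1, h⟩, true), Fin.ext rfl⟩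
    · exact ⟨Sum.inr (), Fin.ext (by have := v.2; simp [Fin.last]; omega)⟩

namespace G13

variable {n : ℕ}

/-- The `i`-th edge of the play that chooses the bit `b` in round `i`: the edge from `i` to `i + 1`
labelled `b` if `i < n`, and the self-loop on the last vertex otherwise. -/
def edge (n i : ℕ) (b : Bool) : (Fin n × Bool) ⊕ Unit :=
  if h : i < n then Sum.inl (⟨i, h⟩, b) else Sum.inr ()

/-- The bit labelling an edge; the value on the self-loop is arbitrary. -/
def bit : (Fin n × Bool) ⊕ Unit → Bool
  | Sum.inl (_, b) => b
  | Sum.inr _ => true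

lemma bit_edge {i : ℕ} (h : i < n) (b : Bool) : bit (edge n i b) = b := by
  simp [edge, h, bit]

variable (a a' : Fin n → ℕ) (lam : ℚ)

lemma src_edge (i : ℕ) (b : Bool) : ((G13 n a a' lam).src (edge n i b)).1 = min i n := by
  unfold edge
  split_ifs with h
  · simp [G13]; omega
  · simp [G13]; omega

lemma tgt_edge (i : ℕ) (b : Bool) : ((G13 n a a' lam).tgt (edge n i b)).1 = min (i + 1) n := by
  unfold edge
  split_ifs with h
  · simp [G13]; omega
  · simp [G13]; omega

/-- An edge is determined by its source and its bit. -/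
lemma eq_edge_of_src {e : (Fin n × Bool) ⊕ Unit} {i : ℕ}
    (h : ((G13 n a a' lam).src e).1 = min i n) : e = edge n i (bit e) := by
  rcases e with ⟨j, b⟩ | u
  · have hj : j.1 = min i n := by simpa [G13] using h
    have hi : i < n := by have := j.2; omega
    have hji : j = ⟨i, hi⟩ := Fin.ext (by simp; omega)
    simp [edge, hi, bit, hji]
  · have hj : n = min i n := by simpa [G13] using h
    have hi : ¬ i < n := by omega
    simp [edge, hi]

lemma eq_edge_of_isPlay {ρ : ℕ → (Fin n × Bool) ⊕ Unit} (hρ : (G13 n a a' lam).IsPlay ρ) (i : ℕ) :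
    ρ i = edge n i (bit (ρ i)) := by
  induction i with
  | zero => exact eq_edge_of_src a a' lam (by rw [hρ.1]; simp [G13])
  | succ i ih =>
    apply eq_edge_of_src a a' lam
    rw [hρ.2 i, ih, tgt_edge]

lemma isPlay_edge (c : ℕ → Bool) : (G13 n a a' lam).IsPlay (fun i => edge n i (c i)) := by
  refine ⟨Fin.ext ?_, fun i => Fin.ext ?_⟩
  · rw [src_edge]; simp [G13]
  · rw [src_edge, tgt_edge]

lemma DS_edge (h0 : 0 < lam) (c : ℕ → Bool) :
    (G13 n a a' lam).DS (lam : ℝ) (fun i => edge n i (c i)) =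
      ((∑ i : Fin n, if c i then a i else a' i : ℕ) : ℝ) := by
  have hl : (lam : ℝ) ≠ 0 := by exact_mod_cast h0.ne'
  unfold EdgeGame.DS
  rw [tsum_eq_sum (s := Finset.range n), Finset.sum_range, Nat.cast_sum]
  · refine Finset.sum_congr rfl fun i _ => ?_
    have hi : edge n i.1 (c i) = Sum.inl (i, c i) := by simp [edge]
    simp only [hi]
    simp only [G13]
    push_cast
    rw [mul_div_cancel₀ _ (pow_ne_zero _ hl)]
    split_ifs <;> simp
  · intro i hi
    have hi' : ¬ i < n := by simpa using hi
    simp [edge, hi', G13]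

lemma mem_Ioo_iff (m t : ℕ) : (m : ℝ) ∈ Set.Ioo ((t : ℝ) - 1) ((t : ℝ) + 1) ↔ m = t := by
  constructor
  · rintro ⟨h, h'⟩
    have h2 : t < m + 1 := by exact_mod_cast (by linarith : (t : ℝ) < m + 1)
    have h3 : m < t + 1 := by exact_mod_cast h'
    omega
  · rintro rfl
    constructor <;> linarith

/-- The index of the vertex reached after a list of edges. -/
def cur (l : List ((Fin n × Bool) ⊕ Unit)) : ℕ :=
  match l.getLast? with
  | none => 0
  | some e => ((G13 n a a' lam).tgt e).1

lemma cur_append (l : List ((Fin n × Bool) ⊕ Unit)) (e) :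
    cur a a' lam (l ++ [e]) = ((G13 n a a' lam).tgt e).1 := by
  simp [cur]

lemma cur_prefixList (ρ : ℕ → (Fin n × Bool) ⊕ Unit) (i : ℕ) :
    cur a a' lam (EdgeGame.prefixList ρ i) = ((G13 n a a' lam).tgt (ρ i)).1 := by
  rw [EdgeGame.prefixList, List.ofFn_succ', List.concat_eq_append, cur_append]
  simp

end G13

/-- Eve wins the subset sum game given by `t` and the pairs
`(a i, a' i)` iff she wins the associated interval discounted sum game with discount
factor `λ` and winning set `I = (t − 1, t + 1)`. -/
theorem stmt13 (n t : ℕ) (a a' : Fin n → ℕ) (lam : ℚ) (h0 : 0 < lam) (h1 : lam < 1) :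
    SSGEveWins n t a a' ↔
      (G13 n a a' lam).EveWins
        (fun ρ => (G13 n a a' lam).DS (lam : ℝ) ρ ∈ Set.Ioo ((t : ℝ) - 1) ((t : ℝ) + 1)) := by
  constructor
  · rintro ⟨σ, hσ⟩
    refine ⟨fun l => G13.edge n (G13.cur a a' lam l) (σ (l.map G13.bit)), ⟨?_, ?_⟩, ?_⟩
    · intro h
      simp [G13] at h
    · intro l e _
      apply Fin.ext
      rw [G13.src_edge, G13.cur_append]
      have := ((G13 n a a' lam).tgt e).2
      omega
    · intro ρ hρ hcons
      have hedge := G13.eq_edge_of_isPlay a a' lam hρ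
      have hfun : ρ = fun i => G13.edge n i (G13.bit (ρ i)) := funext hedge
      show (G13 n a a' lam).DS (lam : ℝ) ρ ∈ _
      rw [hfun, G13.DS_edge a a' lam h0 (fun i => G13.bit (ρ i)), G13.mem_Ioo_iff]
      apply hσ (fun i => G13.bit (ρ i))
      rintro ⟨i, hi⟩ hev
      -- Round `0` belongs to Adam, so Eve's move is preceded by some edge.
      obtain _ | k := i
      · simp at hev
      have htgt : ((G13 n a a' lam).tgt (ρ k)).1 = k + 1 := by
        rw [hedge k, G13.tgt_edge]; omega
      have hmem : (G13 n a a' lam).tgt (ρ k) ∈ (G13 n a a' lam).Eve := by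
        show Odd ((G13 n a a' lam).tgt (ρ k)).1
        rw [htgt]
        simp only at hev
        grind
      have := hcons.2 k hmem
      simp only [G13.cur_prefixList, htgt] at this
      simp only [this, G13.bit_edge hi]
      congr 1
      simp [EdgeGame.prefixList, List.map_ofFn, Function.comp_def]
  · rintro ⟨σ, hleg, hσ⟩
    refine ⟨fun l => G13.bit (σ (l.mapIdx fun i b => G13.edge n i b)), fun b hb => ?_⟩
    -- `c` extends the choices `b` to all rounds; its values from `n` on do not matter.
    let c : ℕ → Bool := fun i => if h : i < n then b ⟨i, h⟩ else true
    have hc : ∀ (i : ℕ) (h : i < n), c i = b ⟨i, h⟩ := fun i h => by simp [c, h]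
    have hpre : ∀ i, EdgeGame.prefixList (fun i => G13.edge n i (c i)) i =
        (List.ofFn fun j : Fin (i + 1) => c j).mapIdx fun i b => G13.edge n i b := by
      intro i
      apply List.ext_getElem <;> simp [EdgeGame.prefixList, -List.ofFn_succ]
    have hwin := hσ _ (G13.isPlay_edge a a' lam c) ⟨fun h => by simp [G13] at h, ?_⟩
    · simp only at hwin
      rw [G13.DS_edge a a' lam h0, G13.mem_Ioo_iff] at hwin
      rw [← hwin]
      exact Finset.sum_congr rfl fun i _ => by rw [hc i i.2]
    · intro i hi
      -- Legality forces the proposed edge to leave the current vertex.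
      have hsrc : ((G13 n a a' lam).src
          (σ (EdgeGame.prefixList (fun i => G13.edge n i (c i)) i))).1 = min (i + 1) n := by
        rw [EdgeGame.prefixList, List.ofFn_succ', List.concat_eq_append]
        rw [hleg.2 _ _ (by simpa using hi)]
        simp [G13.tgt_edge]
      rw [G13.eq_edge_of_src a a' lam hsrc]
      by_cases hin : i + 1 < n
      · have hodd : Odd (i + 1) := by
          have h : Odd ((G13 n a a' lam).tgt (G13.edge n i (c i))).1 := hi
          rwa [G13.tgt_edge, min_eq_left hin.le] at h
        show G13.edge n (i + 1) (c (i + 1)) = _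
        rw [hc _ hin, hb ⟨i + 1, hin⟩ (by simp only; grind), hpre]
        congr 5
        funext j
        exact (hc _ _).symm
      · simp [G13.edge, hin]
end

section
/- For every λ ∈ (0, 1) there exists an interval discounted sum game (G, I, λ), with I a non-singleton interval, in which Eve has a winning strategy (ensuring DS_λ(π) ∈ I for every consistent play) but Eve has no positional winning strategy. -/
/-!
Adam first picks a sign `±1` on the way to Eve's only vertex, Eve then picks a sign `±1` on the way
to a sink, and the sink has a loop of weight `0`. A play thus has discounted sum `±1 ± λ`.
With `I = [-1, 1]`, Eve wins by answering with the sign opposite to Adam's, giving `±(1 - λ)`.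
A positional strategy fixes Eve's sign in advance, and Adam beats it by picking that same sign,
giving `±(1 + λ) ∉ I`.
-/

open Filter

/-- Vertices of the sign game. -/
inductive SignVertex
  | adam
  | eve
  | sink

/-- Edges of the sign game: Adam's two parallel moves, Eve's two parallel moves, the sink's loop.
The Boolean `true` encodes the sign `+1`. -/
inductive SignEdge
  | adam (b : Bool)
  | eve (b : Bool)
  | loop

/-- The game in which Adam and then Eve choose a sign, which is the weight of the move. -/
def signGame : EdgeGame SignVertex SignEdge where
  src
    | .adam _ => .adam
    | .eve _ => .eve
    | .loop => .sink
  tgt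
    | .adam _ => .eve
    | .eve _ => .sink
    | .loop => .sink
  w
    | .adam b => if b then 1 else -1
    | .eve b => if b then 1 else -1
    | .loop => 0
  Eve := {.eve}
  init := .adam
  succ
    | .adam => ⟨.adam true, rfl⟩
    | .eve => ⟨.eve true, rfl⟩
    | .sink => ⟨.loop, rfl⟩

/-- Eve's strategy of answering with the opposite of Adam's sign; the value on prefixes not ending
with a move of Adam is irrelevant. -/
def oppositeStrategy (l : List SignEdge) : SignEdge :=
  match l.getLast? with
  | some (.adam b) => .eve (!b)
  | _ => .eve true

lemma signGame_play_shape {ρ : ℕ → SignEdge} (h : signGame.IsPlay ρ) :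
    (∃ b, ρ 0 = .adam b) ∧ (∃ c, ρ 1 = .eve c) ∧ ∀ i, ρ (i + 2) = .loop := by
  obtain ⟨hinit, hstep⟩ := h
  have hadam : ∃ b, ρ 0 = .adam b := by
    cases h0 : ρ 0 <;> simp_all [signGame]
  have heve : ∃ c, ρ 1 = .eve c := by
    obtain ⟨b, hb⟩ := hadam
    have := hstep 0
    cases h1 : ρ 1 <;> simp_all [signGame]
  refine ⟨hadam, heve, fun i => ?_⟩
  induction i with
  | zero =>
    obtain ⟨c, hc⟩ := heve
    have := hstep 1
    cases h2 : ρ 2 <;> simp_all [signGame]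
  | succ i ih =>
    have := hstep (i + 2)
    rw [ih] at this
    cases h2 : ρ (i + 2 + 1) <;> simp_all [signGame]

lemma signGame_DS (lam : ℝ) {ρ : ℕ → SignEdge} (h : ∀ i, ρ (i + 2) = .loop) :
    signGame.DS lam ρ = signGame.w (ρ 0) + lam * signGame.w (ρ 1) := by
  unfold EdgeGame.DS
  rw [tsum_eq_sum (s := Finset.range 2)]
  · simp [Finset.sum_range_succ]
  · intro i hi
    obtain ⟨j, rfl⟩ : ∃ j, i = j + 2 :=
      ⟨i - 2, by have := Finset.mem_range.not.mp hi; omega⟩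
    simp [h j, signGame]

/-- For every discount factor `λ ∈ (0, 1)` there is an interval
discounted sum game `(G, I, λ)`, with `I` a non-singleton interval, in which Eve has
a winning strategy (ensuring `DS_λ(π) ∈ I` for every consistent play) but no
positional winning strategy. -/
theorem stmt14 (lam : ℝ) (h0 : 0 < lam) (h1 : lam < 1) :
    ∃ (V E : Type) (G : EdgeGame V E) (I : Set ℝ),
      I.OrdConnected ∧ (∃ x ∈ I, ∃ y ∈ I, x ≠ y) ∧
      G.EveWins (fun ρ => G.DS lam ρ ∈ I) ∧
      ¬ G.EveWinsPos (fun ρ => G.DS lam ρ ∈ I) := by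
  refine ⟨SignVertex, SignEdge, signGame, Set.Icc (-1) 1, Set.ordConnected_Icc,
    ⟨0, by norm_num, 1, by norm_num, by norm_num⟩, ?_, ?_⟩
  · refine ⟨oppositeStrategy, ⟨by simp [signGame], ?_⟩, ?_⟩
    · intro l e he
      cases e <;> simp_all [signGame, oppositeStrategy]
    · intro ρ hplay hcons
      obtain ⟨⟨b, hb⟩, -, hloop⟩ := signGame_play_shape hplay
      have hanswer : ρ 1 = .eve (!b) := by
        have := hcons.2 0 (by simp [hb, signGame])
        simpa [EdgeGame.prefixList, oppositeStrategy, hb] using this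
      change signGame.DS lam ρ ∈ _
      rw [signGame_DS lam hloop, hb, hanswer]
      cases b <;> simp [signGame] <;> constructor <;> linarith
  · rintro ⟨f, hlegal, hwin⟩
    obtain ⟨c, hc⟩ : ∃ c, f .eve = .eve c := by
      have := hlegal .eve rfl
      cases hf : f .eve <;> simp_all [signGame]
    -- Adam copies the sign `c` to which Eve is committed.
    let ρ : ℕ → SignEdge
      | 0 => .adam c
      | 1 => .eve c
      | _ + 2 => .loop
    have hplay : signGame.IsPlay ρ := by
      refine ⟨rfl, fun i => ?_⟩
      match i with
      | 0 => rfl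
      | 1 => rfl
      | _ + 2 => rfl
    have hmem : signGame.DS lam ρ ∈ Set.Icc (-1 : ℝ) 1 := by
      refine hwin ρ hplay ⟨by simp [signGame], fun i => ?_⟩
      match i with
      | 0 => exact fun _ => hc.symm
      | 1 => simp [ρ, signGame]
      | _ + 2 => simp [ρ, signGame]
    rw [signGame_DS lam (fun _ => rfl)] at hmem
    obtain ⟨hlo, hhi⟩ := hmem
    cases c <;> simp [ρ, signGame] at hlo hhi <;> linarith
end

section
/- There exists a sequence (b_i)_{i∈ℕ} with b_i ∈ {0, 1} for all i such that Σ_{i=0}^∞ (2/3)^i · b_i = 3/2, but no eventually periodic sequence (b_i)_{i∈ℕ} with b_i ∈ {0, 1} satisfies Σ_{i=0}^∞ (2/3)^i · b_i = 3/2. Consequently, in the one-player exact-value discounted sum game with discount factor λ = 2/3 consisting of an initial edge of weight −1 followed by repeated choices between a self-loop of weight +1 and a self-loop of weight 0, Eve has a strategy achieving discounted sum exactly 0, but no finite-memory strategy achieves it. -/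
/-!
Write `T n = ∑ (2/3)^i b (n+i)` for the `n`-th tail value of a 0-1 sequence `b`, so that
`T n = b n + (2/3) T (n+1)`.

*Existence.* The greedy expansion of `3/2` (take the digit `1` as soon as the remainder is at
least `1`) keeps the remainder in `[0, 3]`, because `2/3 ≥ 1/2`; hence the partial sums converge
to `3/2` (`hasSum_of_remainder`, `exists_greedy`).

*No eventually periodic solution.* If `T 0 = 3/2`, the recursion `T (n+1) = (3/2) (T n - b n)`
shows that `2^(n+1) T n` is an odd integer for every `n` (`tail_odd`). So the tails are pairwise
distinct, whereas a sequence that is periodic from index `k` on with period `p` would satisfy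
`T (k+p) = T k` (`not_periodic`).

*The game.* A play takes edge `0` once and then spells a 0-1 sequence `c`, with discounted sum
`-1 + (2/3) ∑ (2/3)^i c i` (`DS_eq`), which vanishes iff the sum is `3/2`. A finite-memory
strategy produces its play by iterating a map on the finite set of pairs (memory state, edge), so
the play is eventually periodic.
-/

open Filter

/-- The one-player discounted sum game of Figure 5: an initial edge (edge `0`) of
weight `−1` from vertex `0` to vertex `1`, followed by repeated choices between a
self-loop of weight `+1` (edge `1`) and a self-loop of weight `0` (edge `2`) on
vertex `1`. All vertices belong to Eve. -/
def G15 : EdgeGame (Fin 2) (Fin 3) where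
  src e := if e = 0 then 0 else 1
  tgt _ := 1
  w e := if e = 0 then -1 else if e = 1 then 1 else 0
  Eve := Set.univ
  init := 0
  succ := by
    intro v
    by_cases h : v = 0
    · exact ⟨0, by simp [h]⟩
    · refine ⟨1, by simp; omega⟩

/-- A digit expansion in base `2/3` with bounded nonnegative remainders `x n` sums to `x 0`. -/
lemma hasSum_of_remainder (b : ℕ → ℕ) (x : ℕ → ℝ) (h0 : ∀ n, 0 ≤ x n) (h3 : ∀ n, x n ≤ 3)
    (hx : ∀ n, x n = b n + 2 / 3 * x (n + 1)) :
    HasSum (fun i : ℕ => (2 / 3 : ℝ) ^ i * b i) (x 0) := by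
  rw [hasSum_iff_tendsto_nat_of_nonneg (fun i => by positivity)]
  have hS : ∀ n, ∑ i ∈ Finset.range n, (2 / 3 : ℝ) ^ i * b i = x 0 - (2 / 3 : ℝ) ^ n * x n := by
    intro n
    induction n with
    | zero => simp
    | succ n ih =>
      rw [Finset.sum_range_succ, ih, hx n]
      ring
  simp only [hS]
  have hp : Tendsto (fun n : ℕ => (2 / 3 : ℝ) ^ n * 3) atTop (nhds 0) := by
    simpa using (tendsto_pow_atTop_nhds_zero_of_lt_one (r := (2 / 3 : ℝ))
      (by norm_num) (by norm_num)).mul_const 3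
  have hz : Tendsto (fun n : ℕ => (2 / 3 : ℝ) ^ n * x n) atTop (nhds 0) :=
    squeeze_zero (fun n => mul_nonneg (by positivity) (h0 n))
      (fun n => mul_le_mul_of_nonneg_left (h3 n) (by positivity)) hp
  simpa using hz.const_sub (x 0)

/-- Remainders of the greedy expansion of `3/2` in base `2/3`. -/
noncomputable def greedyRem : ℕ → ℝ
  | 0 => 3 / 2
  | n + 1 => 3 / 2 * (greedyRem n - if 1 ≤ greedyRem n then 1 else 0)

lemma exists_greedy :
    ∃ b : ℕ → ℕ, (∀ i, b i ≤ 1) ∧ (∑' i : ℕ, (2 / 3 : ℝ) ^ i * b i) = 3 / 2 := by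
  have hb : ∀ n, 0 ≤ greedyRem n ∧ greedyRem n ≤ 3 := by
    intro n
    induction n with
    | zero => norm_num [greedyRem]
    | succ n ih =>
      rw [greedyRem]
      split_ifs with h <;> constructor <;> linarith
  refine ⟨fun n => if 1 ≤ greedyRem n then 1 else 0, fun i => by dsimp only; split_ifs <;> simp, ?_⟩
  refine (hasSum_of_remainder _ greedyRem (fun n => (hb n).1) (fun n => (hb n).2) ?_).tsum_eq
  intro n
  rw [greedyRem]
  push_cast
  ring

lemma summable_digits (b : ℕ → ℕ) (hb : ∀ i, b i ≤ 1) :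
    Summable (fun i : ℕ => (2 / 3 : ℝ) ^ i * b i) := by
  refine Summable.of_nonneg_of_le (fun i => by positivity) (fun i => ?_)
    (summable_geometric_of_lt_one (r := (2 / 3 : ℝ)) (by norm_num) (by norm_num))
  have : (b i : ℝ) ≤ 1 := by exact_mod_cast hb i
  exact mul_le_of_le_one_right (by positivity) this

lemma tail_step (b : ℕ → ℕ) (hb : ∀ i, b i ≤ 1) (n : ℕ) :
    (∑' i : ℕ, (2 / 3 : ℝ) ^ i * b (n + i)) =
      b n + 2 / 3 * ∑' i : ℕ, (2 / 3 : ℝ) ^ i * b (n + 1 + i) := by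
  rw [(summable_digits (fun i => b (n + i)) (fun i => hb _)).tsum_eq_zero_add, ← tsum_mul_left]
  congr 1
  · simp
  · refine tsum_congr fun i => ?_
    rw [show n + (i + 1) = n + 1 + i by ring]
    ring

lemma tail_odd (b : ℕ → ℕ) (hb : ∀ i, b i ≤ 1)
    (h : (∑' i : ℕ, (2 / 3 : ℝ) ^ i * b i) = 3 / 2) (n : ℕ) :
    ∃ m : ℤ, Odd m ∧ (∑' i : ℕ, (2 / 3 : ℝ) ^ i * b (n + i)) * 2 ^ (n + 1) = m := by
  induction n with
  | zero => exact ⟨3, by decide, by simp only [zero_add, h]; norm_num⟩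
  | succ n ih =>
    obtain ⟨m, hm, hT⟩ := ih
    refine ⟨3 * (m - b n * 2 ^ (n + 1)), ?_, ?_⟩
    · refine Odd.mul (by decide) (hm.sub_even ?_)
      exact Even.mul_left (Even.pow_of_ne_zero (by decide) (by omega)) _
    · rw [tail_step b hb n] at hT
      push_cast
      rw [← hT]
      ring

lemma not_periodic (b : ℕ → ℕ) (hb : ∀ i, b i ≤ 1)
    (hper : ∃ k p : ℕ, 0 < p ∧ ∀ i, k ≤ i → b (i + p) = b i) :
    (∑' i : ℕ, (2 / 3 : ℝ) ^ i * b i) ≠ 3 / 2 := by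
  intro h
  obtain ⟨k, p, hp, hper⟩ := hper
  obtain ⟨m, hm, hT⟩ := tail_odd b hb h k
  obtain ⟨q, hq, hTq⟩ := tail_odd b hb h (k + p)
  have e : (∑' i : ℕ, (2 / 3 : ℝ) ^ i * b (k + p + i)) = ∑' i : ℕ, (2 / 3 : ℝ) ^ i * b (k + i) := by
    refine tsum_congr fun i => ?_
    rw [show k + p + i = k + i + p by ring, hper _ (by omega)]
  have hR : (q : ℝ) = m * 2 ^ p := by
    rw [← hTq, e, ← hT]
    ring
  have hZ : q = m * 2 ^ p := by exact_mod_cast hR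
  have hev : Even q := by
    rw [hZ]
    exact Even.mul_left (Even.pow_of_ne_zero (by decide) (by omega)) _
  exact (Int.not_even_iff_odd.mpr hq) hev

/-- The 0-1 sequence spelled by a play of `G15` after its first edge. -/
def digits (ρ : ℕ → Fin 3) (i : ℕ) : ℕ := if ρ (i + 1) = 1 then 1 else 0

lemma digits_le (ρ : ℕ → Fin 3) (i : ℕ) : digits ρ i ≤ 1 := by
  unfold digits
  split_ifs <;> simp

lemma DS_eq (ρ : ℕ → Fin 3) (h0 : ρ 0 = 0) (h1 : ∀ i, ρ (i + 1) ≠ 0) :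
    G15.DS (2 / 3 : ℝ) ρ = -1 + 2 / 3 * ∑' i : ℕ, (2 / 3 : ℝ) ^ i * digits ρ i := by
  have hw : ∀ i, (2 / 3 : ℝ) ^ (i + 1) * (G15.w (ρ (i + 1)) : ℝ) =
      2 / 3 * ((2 / 3 : ℝ) ^ i * digits ρ i) := by
    intro i
    have : (G15.w (ρ (i + 1)) : ℝ) = digits ρ i := by
      simp only [G15, digits, if_neg (h1 i)]
      split_ifs <;> simp
    rw [this]
    ring
  have hs : Summable (fun i => (2 / 3 : ℝ) ^ (i + 1) * (G15.w (ρ (i + 1)) : ℝ)) := by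
    simp only [hw]
    exact (summable_digits _ (digits_le ρ)).mul_left _
  unfold EdgeGame.DS
  rw [((summable_nat_add_iff (f := fun i => (2 / 3 : ℝ) ^ i * (G15.w (ρ i) : ℝ)) 1).mp
    hs).tsum_eq_zero_add]
  simp only [hw, tsum_mul_left]
  simp [h0, G15]

/-- The play produced by a finite-state machine with update `δ` and output `o`, as the sequence
of pairs (memory state before the edge, edge taken). -/
def machineRun {M : Type} (m0 : M) (δ : M → Fin 3 → M) (o : M → Fin 2 → Fin 3) : ℕ → M × Fin 3
  | 0 => (m0, o m0 0)
  | i + 1 =>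
    let s := machineRun m0 δ o i
    (δ s.1 s.2, o (δ s.1 s.2) 1)

lemma machineRun_memRun {M : Type} (m0 : M) (δ : M → Fin 3 → M) (o : M → Fin 2 → Fin 3) (i : ℕ) :
    EdgeGame.memRun δ m0 (fun j => (machineRun m0 δ o j).2) i = (machineRun m0 δ o i).1 := by
  induction i with
  | zero => rfl
  | succ i ih => rw [EdgeGame.memRun, ih]; rfl

lemma machineRun_add {M : Type} (m0 : M) (δ : M → Fin 3 → M) (o : M → Fin 2 → Fin 3) {a b : ℕ}
    (h : machineRun m0 δ o a = machineRun m0 δ o b) (n : ℕ) :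
    machineRun m0 δ o (a + n) = machineRun m0 δ o (b + n) := by
  induction n with
  | zero => exact h
  | succ n ih => rw [← add_assoc, ← add_assoc, machineRun, machineRun, ih]

lemma machineRun_periodic {M : Type} [Fintype M] (m0 : M) (δ : M → Fin 3 → M)
    (o : M → Fin 2 → Fin 3) :
    ∃ k p : ℕ, 0 < p ∧ ∀ i, k ≤ i → machineRun m0 δ o (i + p) = machineRun m0 δ o i := by
  obtain ⟨a, b, hne, hab⟩ := Finite.exists_ne_map_eq_of_infinite (machineRun m0 δ o)
  wlog hlt : a < b generalizing a b
  · exact this b a hne.symm hab.symm (by omega)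
  refine ⟨a, b - a, by omega, fun i hi => ?_⟩
  have := machineRun_add m0 δ o hab (i - a)
  rw [show i + (b - a) = b + (i - a) by omega, ← this, show a + (i - a) = i by omega]

lemma src_eq_zero {e : Fin 3} (h : G15.src e = 0) : e = 0 := by
  by_contra hne
  simp [G15, hne] at h

lemma src_eq_one {e : Fin 3} (h : G15.src e = 1) : e ≠ 0 := by
  rintro rfl
  simp [G15] at h

lemma eveWins : G15.EveWins (fun ρ => G15.DS (2 / 3 : ℝ) ρ = 0) := by
  obtain ⟨b, hb, hsum⟩ := exists_greedy
  -- After a prefix of length `n + 1` the next edge encodes the digit `b n`.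
  refine ⟨fun l => if l.length = 0 then 0 else if b (l.length - 1) = 1 then 1 else 2,
    ⟨fun _ => by simp [G15], fun l e _ => ?_⟩, fun ρ hplay hcons => ?_⟩
  · simp only [G15]
    split_ifs <;> simp_all
  · have h0 : ρ 0 = 0 := src_eq_zero hplay.1
    have h1 : ∀ i, ρ (i + 1) ≠ 0 := fun i => src_eq_one (hplay.2 i)
    have hd : ∀ i, digits ρ i = b i := by
      intro i
      have hi := hcons.2 i (Set.mem_univ _)
      simp only [EdgeGame.prefixList, List.length_ofFn, Nat.add_eq_zero_iff, one_ne_zero,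
        and_false, if_false, Nat.add_sub_cancel] at hi
      have := hb i
      rw [digits, hi]
      by_cases h : b i = 1
      · simp [h]
      · simp [h]; omega
    change G15.DS (2 / 3 : ℝ) ρ = 0
    rw [DS_eq ρ h0 h1]
    simp only [hd, hsum]
    norm_num

lemma not_eveWinsFM : ¬ G15.EveWinsFM (fun ρ => G15.DS (2 / 3 : ℝ) ρ = 0) := by
  rintro ⟨M, _, m0, δ, o, hleg, hwin⟩
  let ρ : ℕ → Fin 3 := fun j => (machineRun m0 δ o j).2
  have hplay : G15.IsPlay ρ := ⟨hleg m0 0 (Set.mem_univ _), fun i => hleg _ 1 (Set.mem_univ _)⟩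
  have hDS : G15.DS (2 / 3 : ℝ) ρ = 0 := by
    refine hwin ρ hplay ⟨fun _ => rfl, fun i _ => ?_⟩
    rw [machineRun_memRun]
    rfl
  rw [DS_eq ρ (src_eq_zero hplay.1) (fun i => src_eq_one (hplay.2 i))] at hDS
  obtain ⟨k, p, hp, hper⟩ := machineRun_periodic m0 δ o
  refine not_periodic (digits ρ) (digits_le ρ) ⟨k, p, hp, fun i hi => ?_⟩ (by linarith)
  have hρ : ρ (i + 1 + p) = ρ (i + 1) := congrArg Prod.snd (hper (i + 1) (by omega))
  rw [digits, digits, show i + p + 1 = i + 1 + p by ring, hρ]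


/-- There is a 0-1 sequence `b` with `Σ (2/3)^i · b i = 3/2`, but
no eventually periodic 0-1 sequence has this property. Consequently, in the
one-player exact-value discounted sum game of Figure 5 (discount factor `λ = 2/3`),
Eve has a strategy achieving discounted sum exactly `0`, but no finite-memory
strategy achieves it. -/
theorem stmt15 :
    (∃ b : ℕ → ℕ, (∀ i, b i ≤ 1) ∧ (∑' i : ℕ, (2 / 3 : ℝ) ^ i * b i) = 3 / 2) ∧
    (∀ b : ℕ → ℕ, (∀ i, b i ≤ 1) →
      (∃ k p : ℕ, 0 < p ∧ ∀ i, k ≤ i → b (i + p) = b i) →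
      (∑' i : ℕ, (2 / 3 : ℝ) ^ i * b i) ≠ 3 / 2) ∧
    G15.EveWins (fun ρ => G15.DS (2 / 3 : ℝ) ρ = 0) ∧
    ¬ G15.EveWinsFM (fun ρ => G15.DS (2 / 3 : ℝ) ρ = 0) := by
  exact ⟨exists_greedy, not_periodic, eveWins, not_eveWinsFM⟩
end

section
/- Consider the interval total-sum game (G, I) with I = (−∞, 0) ∪ (0, ∞), where G has vertices q_0, q_1, q_2, q_≥, q_<, q_3 with V_∃ = {q_2}, initial vertex q_0, and edges: a self-loop on q_0 of weight +1, an edge q_0 → q_1 of weight 0, a self-loop on q_1 of weight −1, an edge q_1 → q_2 of weight 0, an edge q_2 → q_≥ of weight +1, an edge q_2 → q_< of weight 0, a self-loop on q_≥ of weight +1, a self-loop on q_< of weight −1, edges q_≥ → q_3 and q_< → q_3 of weight 0, and a self-loop on q_3 of weight 0. Then Eve has a winning strategy in this game (ensuring Total(π) ≠ 0 for every consistent play), but she has no finite-memory winning strategy: for every strategy of Eve computed by a finite-state machine there is a consistent play π with Total(π) = 0. -/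
/-! Just before Eve moves at `2`, let `s` be the accumulated weight. She wins by moving to `3`
when `0 ≤ s` (the payoff is then at least `s + 1`) and to `4` when `s < 0` (the payoff is then at
most `s`). Plays that never reach `2` have payoff `+∞` (looping on `0`) or `-∞` (looping on `1`).

Conversely, let Adam loop `a` times on `0` and `b` times on `1`, so that `s = a - b`. If Eve moves
to `3` while `a < b`, or to `4` while `b ≤ a`, Adam loops there until the weight is exactly `0` and
then moves to the sink `5`. Hence a winning strategy has to move to `3` exactly when `b ≤ a`.
By the pigeonhole principle a finite-state machine is in the same state after `a` and after `a'`
loops on `0`, for some `a < a'`; with `b = a'` it makes the same move in both cases, and one of the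
two is wrong. -/

open Filter

/-- The game graph of Figure 6: vertices `q₀ = 0`, `q₁ = 1`, `q₂ = 2` (Eve's),
`q₍≥₎ = 3`, `q₍<₎ = 4`, `q₃ = 5`. -/
def G17 : GameGraph (Fin 6) where
  Eve := {2}
  E v u :=
    (v = 0 ∧ (u = 0 ∨ u = 1)) ∨ (v = 1 ∧ (u = 1 ∨ u = 2)) ∨
    (v = 2 ∧ (u = 3 ∨ u = 4)) ∨ (v = 3 ∧ (u = 3 ∨ u = 5)) ∨
    (v = 4 ∧ (u = 4 ∨ u = 5)) ∨ (v = 5 ∧ u = 5)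
  w v u :=
    if v = 0 ∧ u = 0 then 1
    else if v = 1 ∧ u = 1 then -1
    else if v = 2 ∧ u = 3 then 1
    else if v = 3 ∧ u = 3 then 1
    else if v = 4 ∧ u = 4 then -1
    else 0
  init := 0
  succ := by
    intro v
    fin_cases v
    · exact ⟨0, Or.inl ⟨rfl, Or.inl rfl⟩⟩
    · exact ⟨1, Or.inr (Or.inl ⟨rfl, Or.inl rfl⟩)⟩
    · exact ⟨3, Or.inr (Or.inr (Or.inl ⟨rfl, Or.inl rfl⟩))⟩
    · exact ⟨3, Or.inr (Or.inr (Or.inr (Or.inl ⟨rfl, Or.inl rfl⟩)))⟩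
    · exact ⟨4, Or.inr (Or.inr (Or.inr (Or.inr (Or.inl ⟨rfl, Or.inl rfl⟩))))⟩
    · exact ⟨5, Or.inr (Or.inr (Or.inr (Or.inr (Or.inr ⟨rfl, rfl⟩))))⟩

namespace GameGraph

/-! ### Payoffs from eventual bounds on the partial sums -/

lemma total_ne_of_pos (π : ℕ → Fin 6) (N : ℕ) (h : ∀ k ≥ N, 1 ≤ G17.partialSum π k) :
    G17.totalPayoff π ≠ (0 : EReal) := by
  have h1 : (1 : EReal) ≤ G17.totalPayoff π := by
    unfold totalPayoff
    refine le_liminf_of_le (by isBoundedDefault) ?_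
    filter_upwards [eventually_ge_atTop N] with k hk
    have := h k hk
    have h2 : (1 : ℝ) ≤ (G17.partialSum π k : ℝ) := by exact_mod_cast this
    exact_mod_cast h2
  intro h0
  rw [h0] at h1
  exact absurd h1 (by norm_num)

lemma total_ne_of_neg (π : ℕ → Fin 6) (N : ℕ) (h : ∀ k ≥ N, G17.partialSum π k ≤ -1) :
    G17.totalPayoff π ≠ (0 : EReal) := by
  have h1 : G17.totalPayoff π ≤ (((-1 : ℝ)) : EReal) := by
    unfold totalPayoff
    refine liminf_le_of_frequently_le' (Eventually.frequently ?_)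
    filter_upwards [eventually_ge_atTop N] with k hk
    have := h k hk
    have h2 : (G17.partialSum π k : ℝ) ≤ -1 := by exact_mod_cast this
    exact EReal.coe_le_coe_iff.2 h2
  intro h0
  rw [h0, ← EReal.coe_zero, EReal.coe_le_coe_iff] at h1
  norm_num at h1

lemma total_eq_of_zero (π : ℕ → Fin 6) (N : ℕ) (h : ∀ k ≥ N, G17.partialSum π k = 0) :
    G17.totalPayoff π = (0 : EReal) := by
  unfold totalPayoff
  have : (fun k => ((G17.partialSum π k : ℝ) : EReal)) =ᶠ[atTop] fun _ => (0 : EReal) := by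
    filter_upwards [eventually_ge_atTop N] with k hk
    simp [h k hk]
  rw [liminf_congr this]
  simp

lemma partialSum_succ_s17 (π : ℕ → Fin 6) (k : ℕ) :
    G17.partialSum π (k + 1) = G17.partialSum π k + G17.w (π k) (π (k + 1)) := by
  simp [partialSum, Finset.sum_range_succ]

/-! ### Eve's infinite-memory strategy -/

/-- Eve's winning strategy: move to `3` if the accumulated weight of the history is nonnegative,
and to `4` otherwise. The history is padded with `0` to an infinite sequence; the padding is not
read, since a history with `n` vertices has `n - 1` edges. -/
def signStrategy (l : List (Fin 6)) : Fin 6 :=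
  if 0 ≤ G17.partialSum (fun j => l.getD j 0) (l.length - 1) then 3 else 4

lemma signStrategy_prefix (π : ℕ → Fin 6) (i : ℕ) :
    signStrategy (prefixList π i) = if 0 ≤ G17.partialSum π i then 3 else 4 := by
  have : G17.partialSum (fun j => (prefixList π i).getD j 0) ((prefixList π i).length - 1)
      = G17.partialSum π i := by
    have hl : (prefixList π i).length - 1 = i := by simp [prefixList]
    have hg : ∀ j ≤ i, (prefixList π i).getD j 0 = π j := by
      intro j hj
      have hlen : j < (prefixList π i).length := by simp [prefixList]; omega
      rw [List.getD_eq_getElem _ _ hlen]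
      exact List.getElem_ofFn (f := fun j : Fin (i + 1) => π j) (by simpa [prefixList] using hlen)
    rw [hl]
    unfold partialSum
    refine Finset.sum_congr rfl fun j hj => ?_
    have hj' := Finset.mem_range.1 hj
    simp only [hg j (by omega), hg (j + 1) (by omega)]
  rw [signStrategy, this]

lemma eve_wins : G17.EveWins (fun π => G17.totalPayoff π ≠ (0 : EReal)) := by
  refine ⟨signStrategy, ?_, ?_⟩
  · intro l v hv
    have hv : v = 2 := hv
    subst hv
    unfold signStrategy
    split_ifs <;> simp [G17]
  · rintro π ⟨h0, hE⟩ hC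
    have h0 : π 0 = 0 := h0
    by_cases h2 : ∃ i, π i = 2
    · obtain ⟨i, hi⟩ := h2
      have hm := hC i hi
      rw [signStrategy_prefix] at hm
      have hs := partialSum_succ_s17 π i
      by_cases hp : 0 ≤ G17.partialSum π i
      · rw [if_pos hp] at hm
        refine total_ne_of_pos π (i + 1) fun k hk => ?_
        suffices H : (π k = 3 ∨ π k = 5) ∧ 1 ≤ G17.partialSum π k from H.2
        induction k, hk using Nat.le_induction with
        | base =>
          refine ⟨Or.inl hm, ?_⟩
          rw [hs, hi, hm]
          have : G17.w 2 3 = 1 := by simp [G17]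
          omega
        | succ k hk ih =>
          obtain ⟨hv, hsum⟩ := ih
          have hs := partialSum_succ_s17 π k
          have he := hE k
          rcases hv with hv | hv <;> rw [hv] at he hs
          · have he : π (k + 1) = 3 ∨ π (k + 1) = 5 := by simpa [G17] using he
            refine ⟨he, ?_⟩
            rw [hs]
            have : 0 ≤ G17.w 3 (π (k + 1)) := by
              rcases he with he | he <;> rw [he] <;> simp [G17]
            omega
          · have he : π (k + 1) = 5 := by simpa [G17] using he
            refine ⟨Or.inr he, ?_⟩
            rw [hs, he]
            have : G17.w 5 5 = 0 := by simp [G17]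
            omega
      · rw [if_neg hp] at hm
        refine total_ne_of_neg π (i + 1) fun k hk => ?_
        suffices H : (π k = 4 ∨ π k = 5) ∧ G17.partialSum π k ≤ -1 from H.2
        induction k, hk using Nat.le_induction with
        | base =>
          refine ⟨Or.inl hm, ?_⟩
          rw [hs, hi, hm]
          have : G17.w 2 4 = 0 := by simp [G17]
          omega
        | succ k hk ih =>
          obtain ⟨hv, hsum⟩ := ih
          have hs := partialSum_succ_s17 π k
          have he := hE k
          rcases hv with hv | hv <;> rw [hv] at he hs
          · have he : π (k + 1) = 4 ∨ π (k + 1) = 5 := by simpa [G17] using he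
            refine ⟨he, ?_⟩
            rw [hs]
            have : G17.w 4 (π (k + 1)) ≤ 0 := by
              rcases he with he | he <;> rw [he] <;> simp [G17]
            omega
          · have he : π (k + 1) = 5 := by simpa [G17] using he
            refine ⟨Or.inr he, ?_⟩
            rw [hs, he]
            have : G17.w 5 5 = 0 := by simp [G17]
            omega
    · push Not at h2
      by_cases h1 : ∃ j, π j = 1
      · obtain ⟨j, hj⟩ := h1
        have H : ∀ n, π (j + n) = 1 ∧ G17.partialSum π (j + n) = G17.partialSum π j - n := by
          intro n
          induction n with
          | zero => simp [hj]
          | succ n ih =>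
            obtain ⟨hv, hsum⟩ := ih
            have he := hE (j + n)
            have hs := partialSum_succ_s17 π (j + n)
            have hn := h2 (j + n + 1)
            rw [hv] at he hs
            have he : π (j + n + 1) = 1 := by
              simp [G17] at he
              tauto
            refine ⟨he, ?_⟩
            rw [← add_assoc, hs, he]
            have : G17.w 1 1 = -1 := by simp [G17]
            push_cast
            omega
        -- Past `j` the partial sum drops by one at each step.
        refine total_ne_of_neg π (j + (G17.partialSum π j + 1).toNat) fun k hk => ?_
        obtain ⟨n, rfl⟩ : ∃ n, k = j + n := ⟨k - j, by omega⟩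
        rw [(H n).2]
        omega
      · push Not at h1
        have H : ∀ n, π n = 0 ∧ G17.partialSum π n = n := by
          intro n
          induction n with
          | zero => simp [h0, partialSum]
          | succ n ih =>
            obtain ⟨hv, hsum⟩ := ih
            have he := hE n
            have hs := partialSum_succ_s17 π n
            have hn := h1 (n + 1)
            rw [hv] at he hs
            have he : π (n + 1) = 0 := by
              simp [G17] at he
              tauto
            refine ⟨he, ?_⟩
            rw [hs, he]
            have : G17.w 0 0 = 1 := by simp [G17]
            push_cast
            omega
        refine total_ne_of_pos π 1 fun k hk => ?_
        rw [(H k).2]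
        omega

/-! ### Adam's counterplays against finite-state machines -/

/-- The play that loops `a` times on `0` and `b` times on `1`, goes through `2` to `v`,
loops `c` times there and ends in the sink `5`. -/
def counterPlay (a b c : ℕ) (v : Fin 6) (k : ℕ) : Fin 6 :=
  if k ≤ a then 0 else if k ≤ a + b + 1 then 1 else if k = a + b + 2 then 2
  else if k ≤ a + b + 3 + c then v else 5

lemma counterPlay_isPlay (a b c : ℕ) (v : Fin 6) (hv : v = 3 ∨ v = 4) :
    G17.IsPlay (counterPlay a b c v) := by
  refine ⟨by simp [counterPlay, G17], fun i => ?_⟩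
  unfold counterPlay
  rcases hv with rfl | rfl <;> split_ifs <;> first | omega | simp [G17]

lemma counterPlay_eq_two {a b c : ℕ} {v : Fin 6} (hv : v = 3 ∨ v = 4) {i : ℕ}
    (h : counterPlay a b c v i = 2) : i = a + b + 2 := by
  unfold counterPlay at h
  rcases hv with rfl | rfl <;> split_ifs at h <;> first | assumption | simp at h

lemma counterPlay_sum_three (a b c k : ℕ) :
    G17.partialSum (counterPlay a b c 3) k =
      (min k a : ℕ) - (min (k - (a + 1)) b : ℕ) + (min (k - (a + b + 2)) (c + 1) : ℕ) := by
  induction k with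
  | zero => simp [partialSum]
  | succ k ih =>
    rw [partialSum_succ_s17, ih]
    unfold counterPlay
    split_ifs <;> first | omega | (simp [G17]; omega)

lemma counterPlay_sum_four (a b c k : ℕ) :
    G17.partialSum (counterPlay a b c 4) k =
      (min k a : ℕ) - (min (k - (a + 1)) b : ℕ) - (min (k - (a + b + 3)) c : ℕ) := by
  induction k with
  | zero => simp [partialSum]
  | succ k ih =>
    rw [partialSum_succ_s17, ih]
    unfold counterPlay
    split_ifs <;> first | omega | (simp [G17]; omega)

lemma memRun_const {M : Type} (δ : M → Fin 6 → M) (m : M) (π : ℕ → Fin 6) (v : Fin 6)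
    (i n : ℕ) (h : ∀ j < n, π (i + j) = v) :
    memRun δ m π (i + n) = (fun m => δ m v)^[n] (memRun δ m π i) := by
  induction n with
  | zero => rfl
  | succ n ih =>
    rw [← add_assoc, memRun, ih fun j hj => h j (by omega), h n (by omega),
      Function.iterate_succ_apply']

/-- The machine state on reaching `2`: the move there depends on `a` only through the state
reached after the loops on `0`. -/
lemma memRun_counterPlay {M : Type} (δ : M → Fin 6 → M) (m : M) (a b c : ℕ) (v : Fin 6) :
    memRun δ m (counterPlay a b c v) (a + b + 2) =
      (fun m => δ m 1)^[b + 1] ((fun m => δ m 0)^[a + 1] m) := by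
  have h1 := memRun_const δ m (counterPlay a b c v) 0 0 (a + 1) (by
    intro j hj
    unfold counterPlay
    rw [if_pos (by omega)])
  have h2 := memRun_const δ m (counterPlay a b c v) 1 (a + 1) (b + 1) (by
    intro j hj
    unfold counterPlay
    rw [if_neg (by omega), if_pos (by omega)])
  rw [show a + b + 2 = a + 1 + (b + 1) by ring, h2]
  rw [zero_add] at h1
  rw [h1]
  rfl

lemma not_eve_winsFM : ¬ G17.EveWinsFM (fun π => G17.totalPayoff π ≠ (0 : EReal)) := by
  rintro ⟨M, _, m0, δ, o, hlegal, hwin⟩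
  -- The machine's state on reaching `2` after `a` loops on `0` and `b` loops on `1`.
  let mem : ℕ → ℕ → M := fun a b => (fun m => δ m 1)^[b + 1] ((fun m => δ m 0)^[a + 1] m0)
  have hcons : ∀ a b c v, (v = 3 ∨ v = 4) → o (mem a b) 2 = v →
      G17.totalPayoff (counterPlay a b c v) ≠ (0 : EReal) := by
    intro a b c v hv ho
    refine hwin _ (counterPlay_isPlay a b c v hv) ?_
    intro i hi
    have hi : counterPlay a b c v i = 2 := hi
    have hi' := counterPlay_eq_two hv hi
    rw [hi]
    subst hi'
    rw [memRun_counterPlay]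
    refine Eq.trans ?_ ho.symm
    unfold counterPlay
    rw [if_neg (by omega), if_neg (by omega), if_neg (by omega), if_pos (by omega)]
  have h3 : ∀ a b, a < b → o (mem a b) 2 ≠ 3 := by
    intro a b hab ho
    -- The edge into `3` already contributes `1`, hence one loop fewer than `b - a`.
    refine hcons a b (b - a - 1) 3 (Or.inl rfl) ho
      (total_eq_of_zero _ (a + b + (b - a) + 4) fun k hk => ?_)
    rw [counterPlay_sum_three]
    omega
  have h4 : ∀ a b, b ≤ a → o (mem a b) 2 ≠ 4 := by
    intro a b hab ho
    refine hcons a b (a - b) 4 (Or.inr rfl) ho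
      (total_eq_of_zero _ (a + b + (a - b) + 4) fun k hk => ?_)
    rw [counterPlay_sum_four]
    omega
  have key : ∀ a b, a < b →
      (fun m => δ m 0)^[a + 1] m0 ≠ (fun m => δ m 0)^[b + 1] m0 := by
    intro a b hab heq
    have hmem : mem a b = mem b b := by simp only [mem, heq]
    have hmove : o (mem a b) 2 = 3 ∨ o (mem a b) 2 = 4 := by
      simpa [G17] using hlegal (mem a b) 2 rfl
    rcases hmove with h | h
    · exact h3 a b hab h
    · exact h4 b b le_rfl (hmem ▸ h)
  obtain ⟨a, b, hne, heq⟩ :=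
    Finite.exists_ne_map_eq_of_infinite fun a : ℕ => (fun m => δ m 0)^[a + 1] m0
  rcases lt_or_gt_of_ne hne with h | h
  · exact key a b h heq
  · exact key b a h heq.symm

end GameGraph

/-- In the interval total-sum game of Figure 6 with
`I = (−∞, 0) ∪ (0, ∞)`, Eve has a winning strategy (ensuring `Total(π) ≠ 0`), but no
finite-memory winning strategy. -/
theorem stmt17 :
    G17.EveWins (fun π => G17.totalPayoff π ≠ (0 : EReal)) ∧
      ¬ G17.EveWinsFM (fun π => G17.totalPayoff π ≠ (0 : EReal)) :=
  ⟨GameGraph.eve_wins, GameGraph.not_eve_winsFM⟩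
end
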